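/- (Countermodel construction.) If mℓIGL ⊬ R, Γ ⇒ Δ (i.e. there is no ∞-proof of the labelled sequent R, Γ ⇒ Δ in mℓIK4), then there exist a Kripke structure K in pred-IGL, a world w and a w-environment ρ such that for every labelled formula x:A: if x:A ∈ Γ then K, w ⊨^ρ ⟨A⟩ₓ, and if x:A ∈ Δ then K, w ⊭^ρ ⟨A⟩ₓ. -/

import Mathlib

namespace IGL

/-- Modal formulas over propositional symbols indexed by naturals. -/
inductive Formula : Type
  | atom : ℕ → Formula
  | bot  : Formula
  | and  : Formula → Formula → Formula
  | or   : Formula → Formula → Formula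
  | imp  : Formula → Formula → Formula
  | box  : Formula → Formula
  | dia  : Formula → Formula

/-- ¬A abbreviates A → ⊥. -/
def Formula.neg (A : Formula) : Formula := Formula.imp A Formula.bot

/-- Löb's axiom □(□A→A)→□A. -/
def lobAx (A : Formula) : Formula :=
  Formula.imp (Formula.box (Formula.imp (Formula.box A) A)) (Formula.box A)

/-- Boolean evaluation of a formula, treating modal (sub)formulas and atoms as
propositional atoms; used to define substitution instances of classical
propositional tautologies. -/
def evalCPL (v : Formula → Bool) : Formula → Bool
  | Formula.atom n  => v (Formula.atom n)
  | Formula.bot     => false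
  | Formula.and A B => evalCPL v A && evalCPL v B
  | Formula.or  A B => evalCPL v A || evalCPL v B
  | Formula.imp A B => !evalCPL v A || evalCPL v B
  | Formula.box A   => v (Formula.box A)
  | Formula.dia A   => v (Formula.dia A)

/-- A (substitution instance of a) theorem of classical propositional logic. -/
def Taut (A : Formula) : Prop := ∀ v, evalCPL v A = true

/-- The modal logic K: classical propositional logic, axiom k, modus ponens, necessitation. -/
inductive KProof : Formula → Prop
  | taut {A : Formula} : Taut A → KProof A
  | axK (A B : Formula) :
      KProof (Formula.imp (Formula.box (Formula.imp A B))
        (Formula.imp (Formula.box A) (Formula.box B)))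
  | mp {A B : Formula} : KProof (Formula.imp A B) → KProof A → KProof B
  | nec {A : Formula} : KProof A → KProof (Formula.box A)

/-- The modal logic K4: K plus axiom 4. -/
inductive K4Proof : Formula → Prop
  | taut {A : Formula} : Taut A → K4Proof A
  | axK (A B : Formula) :
      K4Proof (Formula.imp (Formula.box (Formula.imp A B))
        (Formula.imp (Formula.box A) (Formula.box B)))
  | ax4 (A : Formula) :
      K4Proof (Formula.imp (Formula.box A) (Formula.box (Formula.box A)))
  | mp {A B : Formula} : K4Proof (Formula.imp A B) → K4Proof A → K4Proof B
  | nec {A : Formula} : K4Proof A → K4Proof (Formula.box A)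

/-- Gödel–Löb logic GL: K4 plus Löb's axiom. -/
inductive GLProof : Formula → Prop
  | taut {A : Formula} : Taut A → GLProof A
  | axK (A B : Formula) :
      GLProof (Formula.imp (Formula.box (Formula.imp A B))
        (Formula.imp (Formula.box A) (Formula.box B)))
  | ax4 (A : Formula) :
      GLProof (Formula.imp (Formula.box A) (Formula.box (Formula.box A)))
  | axLob (A : Formula) : GLProof (lobAx A)
  | mp {A B : Formula} : GLProof (Formula.imp A B) → GLProof A → GLProof B
  | nec {A : Formula} : GLProof A → GLProof (Formula.box A)

/-- Classical relational (Kripke) satisfaction. -/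
def sat {W : Type} (R : W → W → Prop) (V : W → ℕ → Prop) : W → Formula → Prop
  | w, Formula.atom n  => V w n
  | _, Formula.bot     => False
  | w, Formula.and A B => sat R V w A ∧ sat R V w B
  | w, Formula.or  A B => sat R V w A ∨ sat R V w B
  | w, Formula.imp A B => sat R V w A → sat R V w B
  | w, Formula.box A   => ∀ v, R w v → sat R V v A
  | w, Formula.dia A   => ∃ v, R w v ∧ sat R V v A

/-- A frame satisfies `A` if every model based on it satisfies `A` at every world. -/
def FrameSat (W : Type) (R : W → W → Prop) (A : Formula) : Prop :=
  ∀ (V : W → ℕ → Prop) (w : W), sat R V w A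

/-- A relation is terminating if it admits no infinite path. -/
def Terminating {α : Type} (r : α → α → Prop) : Prop :=
  ¬ ∃ f : ℕ → α, ∀ n, r (f n) (f (n + 1))

/-! ### Labelled sequents -/

/-- A labelled formula `x : A`. -/
abbrev LFormula := ℕ × Formula

/-- A labelled sequent `R, Γ ⇒ Δ`: a set of relational atoms and two
multisets of labelled formulas. -/
structure Sequent : Type where
  rel : Set (ℕ × ℕ)
  left : Multiset LFormula
  right : Multiset LFormula

/-- Variables occurring in a set of relational atoms. -/
def relVars (R : Set (ℕ × ℕ)) : Set ℕ := {z | ∃ w, (z, w) ∈ R ∨ (w, z) ∈ R}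

/-- Labels occurring in a multiset of labelled formulas. -/
def mLabels (Γ : Multiset LFormula) : Set ℕ := {z | ∃ A, (z, A) ∈ Γ}

/-- The variables/labels occurring in a sequent. -/
def Sequent.vars (S : Sequent) : Set ℕ := relVars S.rel ∪ mLabels S.left ∪ mLabels S.right

/-- `y` is a fresh label for the sequent `S`. -/
def Fresh (y : ℕ) (S : Sequent) : Prop := y ∉ S.vars

/-- A sequent has exactly one formula on the right-hand side. -/
def SingleRHS (S : Sequent) : Prop := Multiset.card S.right = 1

/-- Rule instances of the standard labelled calculi, presented as a relation
between a conclusion and its list of premisses.  The flag `tr` enables the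
transitivity rule (giving ℓK4 rather than ℓK), the flag `thn` enables the
relational thinning rule `th`, and the flag `ir` imposes the restriction that
the →-right and □-right rules have exactly one formula on the RHS (giving the
multi-succedent intuitionistic system mℓIK4). -/
inductive Rule (tr thn ir : Bool) : Sequent → List Sequent → Prop
  | id (R : Set (ℕ × ℕ)) (x p : ℕ) :
      Rule tr thn ir ⟨R, {(x, Formula.atom p)}, {(x, Formula.atom p)}⟩ []
  | cut (R : Set (ℕ × ℕ)) (Γ Γ' Δ Δ' : Multiset LFormula) (x : ℕ) (A : Formula) :
      Rule tr thn ir ⟨R, Γ + Γ', Δ + Δ'⟩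
        [⟨R, Γ, (x, A) ::ₘ Δ⟩, ⟨R, (x, A) ::ₘ Γ', Δ'⟩]
  | wkL (R : Set (ℕ × ℕ)) (Γ Δ : Multiset LFormula) (x : ℕ) (A : Formula) :
      Rule tr thn ir ⟨R, (x, A) ::ₘ Γ, Δ⟩ [⟨R, Γ, Δ⟩]
  | wkR (R : Set (ℕ × ℕ)) (Γ Δ : Multiset LFormula) (x : ℕ) (A : Formula) :
      Rule tr thn ir ⟨R, Γ, (x, A) ::ₘ Δ⟩ [⟨R, Γ, Δ⟩]
  | ctrL (R : Set (ℕ × ℕ)) (Γ Δ : Multiset LFormula) (x : ℕ) (A : Formula) :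
      Rule tr thn ir ⟨R, (x, A) ::ₘ Γ, Δ⟩ [⟨R, (x, A) ::ₘ (x, A) ::ₘ Γ, Δ⟩]
  | ctrR (R : Set (ℕ × ℕ)) (Γ Δ : Multiset LFormula) (x : ℕ) (A : Formula) :
      Rule tr thn ir ⟨R, Γ, (x, A) ::ₘ Δ⟩ [⟨R, Γ, (x, A) ::ₘ (x, A) ::ₘ Δ⟩]
  | th (R R' : Set (ℕ × ℕ)) (Γ Δ : Multiset LFormula) :
      thn = true → Rule tr thn ir ⟨R ∪ R', Γ, Δ⟩ [⟨R, Γ, Δ⟩]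
  | botL (R : Set (ℕ × ℕ)) (Γ Δ : Multiset LFormula) (x : ℕ) :
      Rule tr thn ir ⟨R, (x, Formula.bot) ::ₘ Γ, Δ⟩ []
  | impL (R : Set (ℕ × ℕ)) (Γ Γ' Δ Δ' : Multiset LFormula) (x : ℕ) (A B : Formula) :
      Rule tr thn ir ⟨R, (x, Formula.imp A B) ::ₘ (Γ + Γ'), Δ + Δ'⟩
        [⟨R, Γ, (x, A) ::ₘ Δ⟩, ⟨R, (x, B) ::ₘ Γ', Δ'⟩]
  | impR (R : Set (ℕ × ℕ)) (Γ Δ : Multiset LFormula) (x : ℕ) (A B : Formula) :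
      (ir = true → Δ = 0) →
      Rule tr thn ir ⟨R, Γ, (x, Formula.imp A B) ::ₘ Δ⟩ [⟨R, (x, A) ::ₘ Γ, (x, B) ::ₘ Δ⟩]
  | andL₁ (R : Set (ℕ × ℕ)) (Γ Δ : Multiset LFormula) (x : ℕ) (A B : Formula) :
      Rule tr thn ir ⟨R, (x, Formula.and A B) ::ₘ Γ, Δ⟩ [⟨R, (x, A) ::ₘ Γ, Δ⟩]
  | andL₂ (R : Set (ℕ × ℕ)) (Γ Δ : Multiset LFormula) (x : ℕ) (A B : Formula) :
      Rule tr thn ir ⟨R, (x, Formula.and A B) ::ₘ Γ, Δ⟩ [⟨R, (x, B) ::ₘ Γ, Δ⟩]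
  | orL (R : Set (ℕ × ℕ)) (Γ Δ : Multiset LFormula) (x : ℕ) (A B : Formula) :
      Rule tr thn ir ⟨R, (x, Formula.or A B) ::ₘ Γ, Δ⟩
        [⟨R, (x, A) ::ₘ Γ, Δ⟩, ⟨R, (x, B) ::ₘ Γ, Δ⟩]
  | orR₁ (R : Set (ℕ × ℕ)) (Γ Δ : Multiset LFormula) (x : ℕ) (A B : Formula) :
      Rule tr thn ir ⟨R, Γ, (x, Formula.or A B) ::ₘ Δ⟩ [⟨R, Γ, (x, A) ::ₘ Δ⟩]
  | orR₂ (R : Set (ℕ × ℕ)) (Γ Δ : Multiset LFormula) (x : ℕ) (A B : Formula) :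
      Rule tr thn ir ⟨R, Γ, (x, Formula.or A B) ::ₘ Δ⟩ [⟨R, Γ, (x, B) ::ₘ Δ⟩]
  | andR (R : Set (ℕ × ℕ)) (Γ Δ : Multiset LFormula) (x : ℕ) (A B : Formula) :
      Rule tr thn ir ⟨R, Γ, (x, Formula.and A B) ::ₘ Δ⟩
        [⟨R, Γ, (x, A) ::ₘ Δ⟩, ⟨R, Γ, (x, B) ::ₘ Δ⟩]
  | diaL (R : Set (ℕ × ℕ)) (Γ Δ : Multiset LFormula) (x y : ℕ) (A : Formula) :
      Fresh y ⟨R, (x, Formula.dia A) ::ₘ Γ, Δ⟩ →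
      Rule tr thn ir ⟨R, (x, Formula.dia A) ::ₘ Γ, Δ⟩
        [⟨insert (x, y) R, (y, A) ::ₘ Γ, Δ⟩]
  | diaR (R : Set (ℕ × ℕ)) (Γ Δ : Multiset LFormula) (x y : ℕ) (A : Formula) :
      (x, y) ∈ R →
      Rule tr thn ir ⟨R, Γ, (x, Formula.dia A) ::ₘ Δ⟩ [⟨R, Γ, (y, A) ::ₘ Δ⟩]
  | boxR (R : Set (ℕ × ℕ)) (Γ Δ : Multiset LFormula) (x y : ℕ) (A : Formula) :
      (ir = true → Δ = 0) →
      Fresh y ⟨R, Γ, (x, Formula.box A) ::ₘ Δ⟩ →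
      Rule tr thn ir ⟨R, Γ, (x, Formula.box A) ::ₘ Δ⟩
        [⟨insert (x, y) R, Γ, (y, A) ::ₘ Δ⟩]
  | boxL (R : Set (ℕ × ℕ)) (Γ Δ : Multiset LFormula) (x y : ℕ) (A : Formula) :
      (x, y) ∈ R →
      Rule tr thn ir ⟨R, (x, Formula.box A) ::ₘ Γ, Δ⟩ [⟨R, (y, A) ::ₘ Γ, Δ⟩]
  | trans (R : Set (ℕ × ℕ)) (Γ Δ : Multiset LFormula) (x y z : ℕ) :
      tr = true → (x, y) ∈ R → (y, z) ∈ R →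
      Rule tr thn ir ⟨R, Γ, Δ⟩ [⟨insert (x, z) R, Γ, Δ⟩]

/-- The labelled calculus ℓK. -/
def RuleLK : Sequent → List Sequent → Prop := Rule false true false

/-- The labelled calculus ℓK4 (= ℓK + transitivity rule). -/
def RuleLK4 : Sequent → List Sequent → Prop := Rule true true false

/-- ℓK4 without the thinning rule th. -/
def RuleLK4NoTh : Sequent → List Sequent → Prop := Rule true false false

/-- The multi-succedent intuitionistic calculus mℓIK4: ℓK4 where the →-right
and □-right rules must have exactly one formula on the RHS. -/
def RuleMLIK4 : Sequent → List Sequent → Prop := Rule true true true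

/-- The single-succedent intuitionistic calculus ℓIK4: the restriction of ℓK4
to sequents with exactly one formula on the RHS. -/
def RuleLIK4 : Sequent → List Sequent → Prop :=
  fun S ps => RuleLK4 S ps ∧ SingleRHS S ∧ ∀ p ∈ ps, SingleRHS p

/-- ℓIK4 without the thinning rule th. -/
def RuleLIK4NoTh : Sequent → List Sequent → Prop :=
  fun S ps => RuleLK4NoTh S ps ∧ SingleRHS S ∧ ∀ p ∈ ps, SingleRHS p

/-- Finite (wellfounded) derivability from a set of rule instances. -/
inductive Deriv (rule : Sequent → List Sequent → Prop) : Sequent → Prop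
  | step (S : Sequent) (prems : List Sequent) :
      rule S prems → (∀ S' ∈ prems, Deriv rule S') → Deriv rule S

/-! ### Non-wellfounded proofs -/

/-- A (possibly infinite) preproof of `S₀`: a tree of sequents, given as a
partial labelling of finite paths (lists of child indices), whose root is `S₀`
and in which every node is the conclusion of a rule instance whose premisses
are exactly its children. -/
structure Preproof (rule : Sequent → List Sequent → Prop) (S₀ : Sequent) : Type where
  node : List ℕ → Option Sequent
  root : node [] = some S₀
  children : ∀ p S, node p = some S →
    ∃ prems : List Sequent, rule S prems ∧ ∀ i : ℕ, node (p ++ [i]) = prems[i]?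

/-- The path of length `n` along the branch determined by `f`. -/
def branchPath (f : ℕ → ℕ) (n : ℕ) : List ℕ := (List.range n).map f

/-- An infinite sequence of sequents (a branch) has a progressing trace:
from some point on there are labels `x i` occurring in the `i`-th sequent with
either `x (i+1) = x i` or the relational atom `(x i) R (x (i+1))` occurring in
the `i`-th sequent, the latter happening infinitely often. -/
def Progressing (Sb : ℕ → Sequent) : Prop :=
  ∃ (k : ℕ) (x : ℕ → ℕ),
    (∀ i, k ≤ i → x i ∈ (Sb i).vars) ∧
    (∀ i, k ≤ i → x (i + 1) = x i ∨ (x i, x (i + 1)) ∈ (Sb i).rel) ∧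
    (∀ n, ∃ i, n ≤ i ∧ k ≤ i ∧ (x i, x (i + 1)) ∈ (Sb i).rel)

/-- `S₀` has an ∞-proof: a preproof all of whose infinite branches have a
progressing trace. -/
def InfProof (rule : Sequent → List Sequent → Prop) (S₀ : Sequent) : Prop :=
  ∃ P : Preproof rule S₀,
    ∀ (f : ℕ → ℕ) (Sb : ℕ → Sequent),
      (∀ n, P.node (branchPath f n) = some (Sb n)) → Progressing Sb

/-! ### Birelational semantics -/

/-- A birelational model on the set of worlds `W`: an intuitionistic partial
order `le`, an accessibility relation `acc` satisfying the frame conditions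
(F1) and (F2), and a monotone valuation. -/
structure Birel (W : Type) : Type where
  le : W → W → Prop
  le_refl : ∀ w, le w w
  le_trans : ∀ u v w, le u v → le v w → le u w
  le_antisymm : ∀ u v, le u v → le v u → u = v
  acc : W → W → Prop
  F1 : ∀ w w' v, le w w' → acc w v → ∃ v', le v v' ∧ acc w' v'
  F2 : ∀ w v v', acc w v → le v v' → ∃ w', le w w' ∧ acc w' v'
  val : W → ℕ → Prop
  val_mono : ∀ w w', le w w' → ∀ p, val w p → val w' p

/-- Birelational satisfaction. -/
def bsat {W : Type} (B : Birel W) : W → Formula → Prop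
  | w, Formula.atom p  => B.val w p
  | _, Formula.bot     => False
  | w, Formula.and A C => bsat B w A ∧ bsat B w C
  | w, Formula.or  A C => bsat B w A ∨ bsat B w C
  | w, Formula.imp A C => ∀ w', B.le w w' → bsat B w' A → bsat B w' C
  | w, Formula.box A   => ∀ w' v, B.le w w' → B.acc w' v → bsat B v A
  | w, Formula.dia A   => ∃ v, B.acc w v ∧ bsat B v A

/-- Membership in the class birel-IGL: the accessibility relation is
transitive and the composite ≤;R is terminating. -/
def BirelIGL {W : Type} (B : Birel W) : Prop :=
  Transitive B.acc ∧ Terminating (fun u v => ∃ m, B.le u m ∧ B.acc m v)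

/-- An interpretation of a sequent into a birelational model: a map on labels
sending relational atoms of the sequent to accessibility-related worlds. -/
def Interp {W : Type} (B : Birel W) (I : ℕ → W) (S : Sequent) : Prop :=
  ∀ x y, (x, y) ∈ S.rel → B.acc (I x) (I y)

/-- `B, I ⊨ S`. -/
def seqSat {W : Type} (B : Birel W) (I : ℕ → W) (S : Sequent) : Prop :=
  (∀ q ∈ S.left, bsat B (I q.1) q.2) → ∃ q ∈ S.right, bsat B (I q.1) q.2

/-- `B ⊨ S`: satisfaction under every interpretation. -/
def seqValid {W : Type} (B : Birel W) (S : Sequent) : Prop :=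
  ∀ I : ℕ → W, Interp B I S → seqSat B I S

/-- Conjunction of a nonempty list of formulas `A ∧ B₁ ∧ ... ∧ Bₙ`. -/
def conjList : Formula → List Formula → Formula
  | A, [] => A
  | A, B :: l => Formula.and A (conjList B l)

/-! ### (Quasi-)trees -/

/-- A set of relational atoms is a tree: there is a root from which every
other variable is reachable by a unique path of relational atoms. -/
def IsTree (R : Set (ℕ × ℕ)) : Prop :=
  ∃ x₀ ∈ relVars R, ∀ x ∈ relVars R, x ≠ x₀ →
    ∃! l : List ℕ, l ≠ [] ∧ List.Chain (fun a b => (a, b) ∈ R) x₀ l ∧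
      l.getLast? = some x

/-- A quasi-tree: squeezed between a tree and its transitive closure. -/
def IsQuasiTree (R : Set (ℕ × ℕ)) : Prop :=
  ∃ R₀ : Set (ℕ × ℕ), IsTree R₀ ∧ R₀ ⊆ R ∧
    ∀ q ∈ R, Relation.TransGen (fun a b => (a, b) ∈ R₀) q.1 q.2

/-- The (single-succedent) sequent `R, Γ ⇒ x:A` is quasi-tree-like. -/
def QuasiTreeLike (R : Set (ℕ × ℕ)) (Γ : Multiset LFormula) (x : ℕ) : Prop :=
  (R = ∅ ∧ mLabels Γ ⊆ {x}) ∨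
  (IsQuasiTree R ∧ mLabels Γ ∪ {x} ⊆ relVars R)

/-! ### Kripke predicate structures -/

/-- A Kripke (predicate) structure: partially ordered worlds, growing nonempty
domains, monotone interpretations of the unary predicates, and growing binary
relations on the domains. -/
structure Kripke (W D : Type) : Type where
  le : W → W → Prop
  le_refl : ∀ w, le w w
  le_trans : ∀ u v w, le u v → le v w → le u w
  le_antisymm : ∀ u v, le u v → le v u → u = v
  Dom : W → Set D
  Dom_ne : ∀ w, (Dom w).Nonempty
  Dom_mono : ∀ w w', le w w' → Dom w ⊆ Dom w'
  Pr : W → ℕ → Set D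
  Pr_sub : ∀ w p, Pr w p ⊆ Dom w
  Pr_mono : ∀ w w' p, le w w' → Pr w p ⊆ Pr w' p
  Rel : W → D → D → Prop
  Rel_dom : ∀ w d e, Rel w d e → d ∈ Dom w ∧ e ∈ Dom w
  Rel_mono : ∀ w w' d e, le w w' → Rel w d e → Rel w' d e

/-- Satisfaction `K, w ⊨^ρ ⟨A⟩ₓ` of the standard translation of `A`; since the
translation of `A` at `x` has only `x` free, satisfaction is presented through
the value `d = ρ x` of the environment at `x`. -/
def ksat {W D : Type} (K : Kripke W D) : W → D → Formula → Prop
  | w, d, Formula.atom p  => d ∈ K.Pr w p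
  | _, _, Formula.bot     => False
  | w, d, Formula.and A B => ksat K w d A ∧ ksat K w d B
  | w, d, Formula.or  A B => ksat K w d A ∨ ksat K w d B
  | w, d, Formula.imp A B => ∀ w', K.le w w' → ksat K w' d A → ksat K w' d B
  | w, d, Formula.box A   => ∀ w' e, K.le w w' → K.Rel w' d e → ksat K w' e A
  | w, d, Formula.dia A   => ∃ e, K.Rel w d e ∧ ksat K w e A

/-- Membership in the class pred-IGL: each `R_w` is transitive and the
composite `≤_{D_W} ; R_{D_W}` on pairs `(w, d)` with `d ∈ D_w` is terminating. -/
def PredIGL {W D : Type} (K : Kripke W D) : Prop :=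
  (∀ w, Transitive (K.Rel w)) ∧
  ¬ ∃ (f : ℕ → W) (g : ℕ → D),
      ∀ n, g n ∈ K.Dom (f n) ∧ K.le (f n) (f (n + 1)) ∧
        K.Rel (f (n + 1)) (g n) (g (n + 1))

/-!
Proofs are first sought in a cyclic calculus with cut on sequents of sets. It may jump back to an
earlier sequent, a companion recorded in a history, along a renaming of labels that moves one of the
tracked labels along a relational atom and fixes the labels tracked before it. A cyclic proof
unfolds to an ∞-proof: on an infinite branch of the unfolding some companion recurs forever, and the
least position at which jumps to it make progress infinitely often gives a progressing trace.

A sequent without a cyclic proof is saturated to a finite forest of labels. Saturation terminates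
because a second witness of a diamond above a first one would permit a jump. Worlds of the
countermodel are finite runs of saturated forests. Each phase of a run refutes an implication or a
box and records the refuted sequent as a companion.

Suppose that `≤ ; R` had an infinite path. It lives on an infinite run, and the phases of the run
act above each label of the path infinitely often: otherwise Kruskal's theorem shows that the forest
above some label becomes stationary, hence stays finite, although it contains the rest of the path.
Kruskal's theorem for forests coloured by finitely many formulas then yields two phases such that
the sequent refuted in the earlier one embeds into the sequent refuted in the later one, with a
label of the path moved along `R`. The later sequent is therefore provable by a jump, a
contradiction.
-/

/-! ### Building ∞-proofs -/

section Progress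

theorem progressing_of_path_in_union {Sb : ℕ → Sequent} (hmono : Monotone fun t => (Sb t).rel)
    {y : ℕ → ℕ} (hy : ∀ j, ∃ i, (y j, y (j + 1)) ∈ (Sb i).rel) : Progressing Sb := by
  classical
  choose i hi using hy
  -- Follow the path greedily: move to its next label as soon as the edge is present.
  let pos : ℕ → ℕ := fun t => Nat.rec 0
    (fun s c => if (y c, y (c + 1)) ∈ (Sb s).rel then c + 1 else c) t
  have pos_succ : ∀ t, pos (t + 1) =
      if (y (pos t), y (pos t + 1)) ∈ (Sb t).rel then pos t + 1 else pos t := fun _ => rfl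
  have label_mem : ∀ t, pos t = 0 ∨ y (pos t) ∈ relVars (Sb t).rel := by
    intro t
    induction t with
    | zero => exact Or.inl rfl
    | succ t ih =>
      have grow := hmono (Nat.le_succ t)
      rw [pos_succ]
      split_ifs with hedge
      · exact Or.inr ⟨_, Or.inr (grow hedge)⟩
      · exact ih.imp_right fun ⟨w, hw⟩ => ⟨w, hw.imp (@grow _) (@grow _)⟩
  refine ⟨i 0, fun t => y (pos t), fun t ht => Or.inl (Or.inl ?_), fun t _ => ?_, fun n => ?_⟩
  · rcases label_mem t with h0 | hmem
    · exact ⟨y 1, Or.inl (by simpa only [h0] using hmono ht (hi 0))⟩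
    · exact hmem
  · simp only [pos_succ]
    split_ifs with hedge
    · exact Or.inr hedge
    · exact Or.inl rfl
  · by_contra! hstuck
    let N := max n (i 0)
    have no_edge : ∀ t, N ≤ t → (y (pos t), y (pos t + 1)) ∉ (Sb t).rel := fun t ht hedge =>
      hstuck t (le_of_max_le_left ht) (le_of_max_le_right ht) (by
        rw [pos_succ, if_pos hedge]; exact hedge)
    have pos_const : ∀ t, N ≤ t → pos t = pos N := fun t ht => by
      induction t, ht using Nat.le_induction with
      | base => rfl
      | succ t ht ih => rw [pos_succ, if_neg (no_edge t ht), ih]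
    have ht : N ≤ max N (i (pos N)) := le_max_left _ _
    refine no_edge _ ht ?_
    rw [pos_const _ ht]
    exact hmono (le_max_right _ _) (hi (pos N))

theorem exists_path_of_weak_path {α : Type*} {E : ℕ → α → α → Prop} {a : ℕ → α} {k : ℕ}
    (hstep : ∀ t ≥ k, a (t + 1) = a t ∨ E t (a t) (a (t + 1)))
    (hinf : ∀ n, ∃ t ≥ n, E t (a t) (a (t + 1))) :
    ∃ y : ℕ → α, ∀ j, ∃ i, E i (y j) (y (j + 1)) := by
  have next : ∀ t : {t // k ≤ t}, ∃ s : {s // k ≤ s}, ∃ i, E i (a t) (a s) := by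
    rintro ⟨t, ht⟩
    obtain ⟨t', htt', hE⟩ := hinf t
    obtain ⟨d, rfl⟩ := Nat.exists_eq_add_of_le htt'
    clear htt'
    induction d generalizing t with
    | zero => exact ⟨⟨t + 1, by omega⟩, t, hE⟩
    | succ d ih =>
      rcases hstep t ht with hstay | hmove
      · rw [show t + (d + 1) = t + 1 + d by omega] at hE
        obtain ⟨s, i, hs⟩ := ih (t + 1) (by omega) hE
        exact ⟨s, i, hstay ▸ hs⟩
      · exact ⟨⟨t + 1, by omega⟩, t, hmove⟩
  choose next hnext using next
  exact ⟨fun j => a (next^[j] ⟨k, le_rfl⟩), fun j => by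
    simpa only [Function.iterate_succ_apply'] using hnext _⟩

end Progress

section Unfolding

theorem InfProof.of_coalgebra {M : Type} {rule : Sequent → List Sequent → Prop}
    (seq : M → Sequent) (succ : M → List M) (hrule : ∀ m, rule (seq m) ((succ m).map seq))
    (start : M) (hprog : ∀ s : ℕ → M, s 0 = start → (∀ t, s (t + 1) ∈ succ (s t)) →
      Progressing (seq ∘ s)) :
    InfProof rule (seq start) := by
  let walk : List ℕ → Option M :=
    fun p => p.foldl (fun o i => o.bind fun m => (succ m)[i]?) (some start)
  have walk_snoc : ∀ p i, walk (p ++ [i]) = (walk p).bind fun m => (succ m)[i]? := fun p i => by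
    simp only [walk, List.foldl_append, List.foldl_cons, List.foldl_nil]
  refine ⟨⟨fun p => (walk p).map seq, rfl, fun p S hS => ?_⟩, fun f Sb hSb => ?_⟩
  · obtain ⟨m, hm, rfl⟩ := Option.map_eq_some_iff.1 hS
    refine ⟨_, hrule m, fun i => ?_⟩
    rw [walk_snoc, hm, List.getElem?_map, Option.bind_some]
  · choose s hwalk hseq using fun n => Option.map_eq_some_iff.1 (hSb n)
    obtain rfl : seq ∘ s = Sb := funext hseq
    refine hprog s (Option.some_injective _ (hwalk 0).symm) fun t => ?_
    have hsucc := hwalk (t + 1)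
    rw [show branchPath f (t + 1) = branchPath f t ++ [f t] by simp [branchPath, List.range_succ],
      walk_snoc, hwalk t, Option.bind_some] at hsucc
    exact List.mem_of_getElem? hsucc

theorem Progressing.of_tail {Sb : ℕ → Sequent} (h : Progressing fun t => Sb (t + 1)) :
    Progressing Sb := by
  obtain ⟨k, x, hmem, hstep, hinf⟩ := h
  refine ⟨k + 1, fun t => x (t - 1), fun t ht => ?_, fun t ht => ?_, fun n => ?_⟩
  · obtain ⟨t, rfl⟩ := Nat.exists_eq_add_of_le' (Nat.one_le_of_lt ht)
    exact hmem t (by omega)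
  · obtain ⟨t, rfl⟩ := Nat.exists_eq_add_of_le' (Nat.one_le_of_lt ht)
    exact hstep t (by omega)
  · obtain ⟨t, hn, hk, hedge⟩ := hinf n
    exact ⟨t + 1, by omega, by omega, hedge⟩

/-- `DerivesFrom P n S`: the sequent `S` has a finite derivation in mℓIK4, of height at most `n`,
all of whose open leaves satisfy `P` and along which relational atoms are never discarded. -/
def DerivesFrom (P : Sequent → Prop) : ℕ → Sequent → Prop
  | 0, S => P S
  | n + 1, S => P S ∨ ∃ prems, RuleMLIK4 S prems ∧
      ∀ T ∈ prems, S.rel ⊆ T.rel ∧ DerivesFrom P n T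

/-- `S` follows by a finite derivation in mℓIK4 from sequents satisfying `P`. -/
def Derives (P : Sequent → Prop) (S : Sequent) : Prop := ∃ n, DerivesFrom P n S

theorem exists_forall_mem_of_monotone {α : Type*} {Q : ℕ → α → Prop}
    (hQ : ∀ a, Monotone fun n => Q n a) {l : List α} (h : ∀ a ∈ l, ∃ n, Q n a) :
    ∃ n, ∀ a ∈ l, Q n a := by
  have hev : ∀ a ∈ l, ∀ᶠ n in Filter.atTop, Q n a := fun a ha =>
    let ⟨n, hn⟩ := h a ha
    Filter.eventually_atTop.2 ⟨n, fun _ hm => hQ a hm hn⟩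
  exact ((Filter.eventually_all_finite (List.finite_toSet l)).2 hev).exists

theorem DerivesFrom.mono {P : Sequent → Prop} (S : Sequent) :
    Monotone fun n => DerivesFrom P n S := by
  refine monotone_nat_of_le_succ fun n => ?_
  induction n generalizing S with
  | zero => exact Or.inl
  | succ n ih =>
    rintro (hleaf | ⟨prems, hrule, hprems⟩)
    · exact Or.inl hleaf
    · exact Or.inr ⟨prems, hrule, fun T hT => ⟨(hprems T hT).1, ih T (hprems T hT).2⟩⟩

theorem Derives.leaf {P : Sequent → Prop} {S : Sequent} (h : P S) : Derives P S := ⟨0, h⟩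

theorem Derives.step {P : Sequent → Prop} {S : Sequent} {prems : List Sequent}
    (hrule : RuleMLIK4 S prems) (hprems : ∀ T ∈ prems, S.rel ⊆ T.rel ∧ Derives P T) :
    Derives P S := by
  obtain ⟨n, hn⟩ := exists_forall_mem_of_monotone DerivesFrom.mono fun T hT => (hprems T hT).2
  exact ⟨n + 1, Or.inr ⟨prems, hrule, fun T hT => ⟨(hprems T hT).1, hn T hT⟩⟩⟩

theorem RuleMLIK4.repeat (S : Sequent) : RuleMLIK4 S [S] := by
  have := Rule.th (tr := true) (thn := true) (ir := true) S.rel ∅ S.left S.right rfl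
  rwa [Set.union_empty] at this

/-- A node of the unfolding of a system of finite derivations: the block `origin` being traversed,
the current sequent of that block, and a bound on the height remaining. -/
structure UnfoldNode {M : Type} (Next : M → M → Prop) (seq : M → Sequent) : Type where
  origin : M
  height : ℕ
  current : Sequent
  derives : DerivesFrom (fun S => ∃ m, Next origin m ∧ seq m = S) height current

variable {M : Type} {Next : M → M → Prop} {seq : M → Sequent}

theorem UnfoldNode.exists_succ (hder : ∀ m, Derives (fun S => ∃ m', Next m m' ∧ seq m' = S) (seq m))
    (q : UnfoldNode Next seq) : ∃ l : List (UnfoldNode Next seq),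
      RuleMLIK4 q.current (l.map UnfoldNode.current) ∧ ∀ q' ∈ l, q.current.rel ⊆ q'.current.rel ∧
        ((q'.origin = q.origin ∧ q'.height < q.height) ∨
          (Next q.origin q'.origin ∧ q'.current = seq q'.origin)) := by
  obtain ⟨m, n, S, hd⟩ := q
  by_cases hleaf : ∃ m', Next m m' ∧ seq m' = S
  · obtain ⟨m', hnext, rfl⟩ := hleaf
    obtain ⟨n', hn'⟩ := hder m'
    refine ⟨[⟨m', n', seq m', hn'⟩], RuleMLIK4.repeat _, ?_⟩
    rintro _ (_ | ⟨_, ⟨⟩⟩)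
    exact ⟨subset_rfl, Or.inr ⟨hnext, rfl⟩⟩
  cases n with
  | zero => exact absurd hd hleaf
  | succ n =>
    obtain ⟨prems, hrule, hprems⟩ := hd.resolve_left hleaf
    refine ⟨prems.pmap (fun T hT => ⟨m, n, T, hT⟩) fun T hT => (hprems T hT).2, ?_, ?_⟩
    · simpa [List.map_pmap] using hrule
    · simp only [List.mem_pmap]
      rintro _ ⟨T, hT, rfl⟩
      exact ⟨(hprems T hT).1, Or.inl ⟨rfl, Nat.lt_succ_self n⟩⟩

theorem UnfoldNode.exists_next_block {q : ℕ → UnfoldNode Next seq}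
    (hq : ∀ t, ((q (t + 1)).origin = (q t).origin ∧ (q (t + 1)).height < (q t).height) ∨
      (Next (q t).origin (q (t + 1)).origin ∧ (q (t + 1)).current = seq (q (t + 1)).origin))
    (t : ℕ) : ∃ s, Next (q t).origin (q s).origin ∧ (q s).current = seq (q s).origin := by
  induction hn : (q t).height using Nat.strong_induction_on generalizing t with
  | _ n ih =>
    rcases hq t with ⟨hsame, hlt⟩ | hnext
    · rw [← hsame]
      exact ih _ (hn ▸ hlt) (t + 1) rfl
    · exact ⟨t + 1, hnext⟩

theorem InfProof.of_derives
    (hder : ∀ m, Derives (fun S => ∃ m', Next m m' ∧ seq m' = S) (seq m)) (start : M)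
    (hpath : ∀ μ : ℕ → M, μ 0 = start → (∀ t, Next (μ t) (μ (t + 1))) →
      ∃ y : ℕ → ℕ, ∀ j, ∃ i, (y j, y (j + 1)) ∈ (seq (μ i)).rel)
    {S : Sequent} (hS : RuleMLIK4 S [seq start]) : InfProof RuleMLIK4 S := by
  choose succ hrule hsucc using UnfoldNode.exists_succ hder
  obtain ⟨n, hn⟩ := hder start
  let first : UnfoldNode Next seq := ⟨start, n, seq start, hn⟩
  refine InfProof.of_coalgebra (fun o : Option _ => o.elim S UnfoldNode.current)
    (fun o => (o.elim [first] succ).map some) (fun o => ?_) none fun s hs0 hs => ?_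
  · cases o with
    | none => exact hS
    | some q => simpa [Function.comp_def] using hrule q
  have exists_node : ∀ t, ∃ q, s (t + 1) = some q := fun t =>
    let ⟨q, _, hq⟩ := List.mem_map.1 (hs t)
    ⟨q, hq.symm⟩
  choose q hq using exists_node
  have hq0 : q 0 = first := by simpa [hs0, hq 0] using hs 0
  have hqsucc : ∀ t, q (t + 1) ∈ succ (q t) := fun t => by simpa [hq] using hs (t + 1)
  choose next hnext hcur using
    UnfoldNode.exists_next_block fun t => (hsucc _ _ (hqsucc t)).2
  obtain ⟨y, hy⟩ := hpath (fun j => (q (next^[j] 0)).origin) (by simp [hq0, first]) fun j => by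
    rw [Function.iterate_succ_apply']
    exact hnext _
  have block_current : ∀ i, (q (next^[i] 0)).current = seq (q (next^[i] 0)).origin := by
    rintro (_ | i)
    · simp [hq0, first]
    · rw [Function.iterate_succ_apply']
      exact hcur _
  refine Progressing.of_tail (progressing_of_path_in_union (y := y)
    (monotone_nat_of_le_succ fun t => ?_) fun j => ?_)
  · simpa [hq] using (hsucc _ _ (hqsucc t)).1
  · obtain ⟨i, hi⟩ := hy j
    exact ⟨next^[i] 0, by simpa [hq, block_current] using hi⟩

end Unfolding

/-! ### Finite derivations in mℓIK4 -/

section FiniteDerivations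

variable {P : Sequent → Prop} {R : Set (ℕ × ℕ)} {Γ Γ' Δ Δ' : Multiset LFormula}

theorem Derives.step_singleton {S T : Sequent} (hrule : RuleMLIK4 S [T]) (hrel : S.rel ⊆ T.rel)
    (h : Derives P T) : Derives P S :=
  .step hrule <| List.forall_mem_singleton.2 ⟨hrel, h⟩

theorem Derives.step_pair {S T U : Sequent} (hrule : RuleMLIK4 S [T, U]) (hT : S.rel ⊆ T.rel)
    (hU : S.rel ⊆ U.rel) (h : Derives P T) (h' : Derives P U) : Derives P S :=
  .step hrule <| List.forall_mem_cons.2 ⟨⟨hT, h⟩, List.forall_mem_singleton.2 ⟨hU, h'⟩⟩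

theorem Derives.closed {S : Sequent} (hrule : RuleMLIK4 S []) : Derives P S :=
  .step hrule (List.forall_mem_nil _)

theorem Derives.weaken (h : Derives P ⟨R, Γ', Δ'⟩) : Derives P ⟨R, Γ' + Γ, Δ' + Δ⟩ := by
  induction Γ using Multiset.induction_on with
  | cons a Γ ih =>
    rw [Multiset.add_cons]
    exact ih.step_singleton (Rule.wkL R _ _ a.1 a.2) subset_rfl
  | empty =>
    rw [add_zero]
    induction Δ using Multiset.induction_on with
    | cons a Δ ih =>
      rw [Multiset.add_cons]
      exact ih.step_singleton (Rule.wkR R _ _ a.1 a.2) subset_rfl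
    | empty => rwa [add_zero]

theorem Derives.contract (hΓ : Γ' ⊆ Γ) (hΔ : Δ' ⊆ Δ) (h : Derives P ⟨R, Γ' + Γ, Δ' + Δ⟩) :
    Derives P ⟨R, Γ, Δ⟩ := by
  induction Γ' using Multiset.induction_on with
  | cons a Γ' ih =>
    rw [Multiset.cons_subset] at hΓ
    obtain ⟨Θ, hΘ⟩ := Multiset.exists_cons_of_mem (Multiset.mem_add.2 (.inr hΓ.1) : a ∈ Γ' + Γ)
    refine ih hΓ.2 ?_
    rw [Multiset.cons_add, hΘ] at h
    rw [hΘ]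
    exact h.step_singleton (Rule.ctrL R Θ _ a.1 a.2) subset_rfl
  | empty =>
    rw [zero_add] at h
    induction Δ' using Multiset.induction_on with
    | cons a Δ' ih =>
      rw [Multiset.cons_subset] at hΔ
      obtain ⟨Θ, hΘ⟩ := Multiset.exists_cons_of_mem (Multiset.mem_add.2 (.inr hΔ.1) : a ∈ Δ' + Δ)
      refine ih hΔ.2 ?_
      rw [Multiset.cons_add, hΘ] at h
      rw [hΘ]
      exact h.step_singleton (Rule.ctrR R _ Θ a.1 a.2) subset_rfl
    | empty => rwa [zero_add] at h

theorem Derives.of_subset (hΓ : Γ' ⊆ Γ) (hΔ : Δ' ⊆ Δ) (h : Derives P ⟨R, Γ', Δ'⟩) :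
    Derives P ⟨R, Γ, Δ⟩ :=
  .contract hΓ hΔ h.weaken

theorem relVars_finite (hR : R.Finite) : (relVars R).Finite :=
  ((hR.image Prod.fst).union (hR.image Prod.snd)).subset fun _ ⟨_, hz⟩ =>
    hz.imp (fun h => ⟨_, h, rfl⟩) fun h => ⟨_, h, rfl⟩

theorem mLabels_finite (Γ : Multiset LFormula) : (mLabels Γ).Finite :=
  ((Multiset.finite_toSet Γ).image Prod.fst).subset fun _ ⟨_, hz⟩ => ⟨_, hz, rfl⟩

theorem Sequent.vars_finite {S : Sequent} (hS : S.rel.Finite) : S.vars.Finite :=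
  ((relVars_finite hS).union (mLabels_finite _)).union (mLabels_finite _)

theorem Derives.identity (A : Formula) (hR : R.Finite) (x : ℕ) :
    Derives P ⟨R, {(x, A)}, {(x, A)}⟩ := by
  induction A generalizing R x with
  | atom p => exact .closed (Rule.id R x p)
  | bot => exact .closed (Rule.botL R 0 _ x)
  | and A B ihA ihB =>
    exact .step_pair (Rule.andR R _ 0 x A B) subset_rfl subset_rfl
      ((ihA hR x).step_singleton (Rule.andL₁ R 0 _ x A B) subset_rfl)
      ((ihB hR x).step_singleton (Rule.andL₂ R 0 _ x A B) subset_rfl)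
  | or A B ihA ihB =>
    exact .step_pair (Rule.orL R 0 _ x A B) subset_rfl subset_rfl
      ((ihA hR x).step_singleton (Rule.orR₁ R _ 0 x A B) subset_rfl)
      ((ihB hR x).step_singleton (Rule.orR₂ R _ 0 x A B) subset_rfl)
  | imp A B ihA ihB =>
    refine .step_singleton (Rule.impR R _ 0 x A B fun _ => rfl) subset_rfl ?_
    rw [← Multiset.cons_zero (x, A.imp B), Multiset.cons_swap]
    exact .step_pair (Rule.impL R {(x, A)} 0 0 {(x, B)} x A B) subset_rfl subset_rfl
      (ihA hR x) (ihB hR x)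
  | box A ih =>
    obtain ⟨y, hy⟩ := (Sequent.vars_finite (S := ⟨R, {(x, A.box)}, {(x, A.box)}⟩) hR).exists_notMem
    exact .step_singleton (Rule.boxR R _ 0 x y A (fun _ => rfl) hy) (Set.subset_insert _ _)
      ((ih (hR.insert _) y).step_singleton
        (Rule.boxL _ 0 _ x y A (Set.mem_insert _ _)) subset_rfl)
  | dia A ih =>
    obtain ⟨y, hy⟩ := (Sequent.vars_finite (S := ⟨R, {(x, A.dia)}, {(x, A.dia)}⟩) hR).exists_notMem
    exact .step_singleton (Rule.diaL R 0 _ x y A hy) (Set.subset_insert _ _)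
      ((ih (hR.insert _) y).step_singleton
        (Rule.diaR _ _ 0 x y A (Set.mem_insert _ _)) subset_rfl)

/-- The relational atoms obtained from `R` by making `y` a successor of `x`, and hence of all
predecessors of `x`. -/
def addChild (R : Set (ℕ × ℕ)) (x y : ℕ) : Set (ℕ × ℕ) :=
  R ∪ {q | q.2 = y ∧ (q.1 = x ∨ (q.1, x) ∈ R)}

theorem addChild_finite (hR : R.Finite) (x y : ℕ) : (addChild R x y).Finite := by
  refine hR.union (((Set.finite_singleton x).union (relVars_finite hR)).prod
    (Set.finite_singleton y) |>.subset ?_)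
  rintro ⟨a, b⟩ ⟨hb, ha⟩
  exact ⟨ha.imp id fun h => ⟨x, Or.inl h⟩, hb⟩

theorem Derives.of_addChild (hR : R.Finite) {x y : ℕ} (h : Derives P ⟨addChild R x y, Γ, Δ⟩) :
    Derives P ⟨insert (x, y) R, Γ, Δ⟩ := by
  have hfin : {z | (z, x) ∈ R}.Finite :=
    (relVars_finite hR).subset fun z hz => ⟨x, Or.inl hz⟩
  suffices ∀ Z ⊆ {z | (z, x) ∈ R}, Z.Finite →
      Derives P ⟨insert (x, y) R ∪ Z ×ˢ {y}, Γ, Δ⟩ → Derives P ⟨insert (x, y) R, Γ, Δ⟩ by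
    refine this _ subset_rfl hfin ?_
    convert h using 2
    ext ⟨a, b⟩
    simp only [addChild, Set.mem_union, Set.mem_insert_iff, Prod.mk.injEq, Set.mem_prod,
      Set.mem_ofPred_eq, Set.mem_singleton_iff]
    tauto
  intro Z hZ hZfin
  induction Z, hZfin using Set.Finite.induction_on with
  | empty => simp
  | @insert z Z _ _ ih =>
    refine fun hd => ih ((Set.subset_insert _ _).trans hZ) (hd.step_singleton ?_ ?_)
    · rw [Set.insert_prod, Set.image_singleton, Set.singleton_union, Set.union_insert]
      exact Rule.trans _ _ _ z x y rfl (Or.inl (Or.inr (hZ (Set.mem_insert _ _))))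
        (Or.inl (Set.mem_insert _ _))
    · exact Set.union_subset_union_right _ (Set.prod_mono_left (Set.subset_insert _ _))

end FiniteDerivations

/-! ### A cyclic calculus on set sequents -/

section CyclicCalculus

/-- A labelled sequent whose two sides are sets, so that the structural rules are implicit. -/
structure SetSequent : Type where
  rel : Set (ℕ × ℕ)
  left : Set LFormula
  right : Set LFormula

/-- The labels occurring in a set sequent. -/
def SetSequent.labels (S : SetSequent) : Set ℕ :=
  relVars S.rel ∪ Prod.fst '' S.left ∪ Prod.fst '' S.right

/-- The set sequent underlying a sequent. -/
def Sequent.toSetSequent (S : Sequent) : SetSequent :=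
  ⟨S.rel, {a | a ∈ S.left}, {a | a ∈ S.right}⟩

/-- A homomorphism of sequents: a renaming of labels preserving relational atoms and both sides. -/
structure IsHom (f : ℕ → ℕ) (S S' : SetSequent) : Prop where
  rel : ∀ ⦃x y⦄, (x, y) ∈ S.rel → (f x, f y) ∈ S'.rel
  left : ∀ ⦃x A⦄, (x, A) ∈ S.left → (f x, A) ∈ S'.left
  right : ∀ ⦃x A⦄, (x, A) ∈ S.right → (f x, A) ∈ S'.right

theorem IsHom.comp {f g : ℕ → ℕ} {S S' S'' : SetSequent} (hg : IsHom g S' S'')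
    (hf : IsHom f S S') : IsHom (g ∘ f) S S'' :=
  ⟨fun _ _ h => hg.rel (hf.rel h), fun _ _ h => hg.left (hf.left h),
    fun _ _ h => hg.right (hf.right h)⟩

theorem IsHom.of_subset {R R' : Set (ℕ × ℕ)} {L L' Δ Δ' : Set LFormula} (hR : R ⊆ R')
    (hL : L ⊆ L') (hΔ : Δ ⊆ Δ') : IsHom id ⟨R, L, Δ⟩ ⟨R', L', Δ'⟩ :=
  ⟨fun _ _ h => hR h, fun _ _ h => hL h, fun _ _ h => hΔ h⟩

/-- Sequents closed without premises in the cyclic calculus. Since the calculus has a cut rule, the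
invertible logical rules of mℓIK4 are represented by such axioms. -/
inductive IsAxiom (S : SetSequent) : Prop
  | id {x A} : (x, A) ∈ S.left → (x, A) ∈ S.right → IsAxiom S
  | botL {x} : (x, .bot) ∈ S.left → IsAxiom S
  | andL₁ {x A B} : (x, .and A B) ∈ S.left → (x, A) ∈ S.right → IsAxiom S
  | andL₂ {x A B} : (x, .and A B) ∈ S.left → (x, B) ∈ S.right → IsAxiom S
  | andR {x A B} : (x, A) ∈ S.left → (x, B) ∈ S.left → (x, .and A B) ∈ S.right → IsAxiom S
  | orL {x A B} : (x, .or A B) ∈ S.left → (x, A) ∈ S.right → (x, B) ∈ S.right → IsAxiom S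
  | orR₁ {x A B} : (x, A) ∈ S.left → (x, .or A B) ∈ S.right → IsAxiom S
  | orR₂ {x A B} : (x, B) ∈ S.left → (x, .or A B) ∈ S.right → IsAxiom S
  | impL {x A B} : (x, .imp A B) ∈ S.left → (x, A) ∈ S.left → (x, B) ∈ S.right → IsAxiom S
  | boxL {x y A} : (x, y) ∈ S.rel → (x, .box A) ∈ S.left → (y, A) ∈ S.right → IsAxiom S
  | diaR {x y A} : (x, y) ∈ S.rel → (y, A) ∈ S.left → (x, .dia A) ∈ S.right → IsAxiom S

/-- The rules with premises of the cyclic calculus. The eigenlabels must avoid the list `T` of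
labels that are currently tracked. -/
inductive Inference (T : List ℕ) (S : SetSequent) : List SetSequent → Prop
  | cut (x : ℕ) (A : Formula) : Inference T S
      [⟨S.rel, S.left, insert (x, A) S.right⟩, ⟨S.rel, insert (x, A) S.left, S.right⟩]
  | impR {x : ℕ} {A B : Formula} : (x, .imp A B) ∈ S.right →
      Inference T S [⟨S.rel, insert (x, A) S.left, {(x, B)}⟩]
  | diaL {x y : ℕ} {A : Formula} : (x, .dia A) ∈ S.left → y ∉ S.labels → y ∉ T →
      Inference T S [⟨addChild S.rel x y, insert (y, A) S.left, S.right⟩]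
  | boxR {x y : ℕ} {A : Formula} : (x, .box A) ∈ S.right → y ∉ S.labels → y ∉ T →
      Inference T S [⟨addChild S.rel x y, S.left, {(y, A)}⟩]

/-- A companion sequent to which a cyclic proof may jump back, with the labels whose progress is
recorded along such jumps. -/
structure HistoryEntry : Type where
  seq : SetSequent
  tracked : List ℕ

/-- The labels tracked by the latest entry of a history. -/
def tracked : List HistoryEntry → List ℕ
  | [] => []
  | e :: _ => e.tracked

/-- `CyclicProof n H S`: the sequent `S` has a cyclic proof of height at most `n` relative to the
companions in `H`. A jump to a companion must fix the tracked labels before some position `p` and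
move the `p`-th one along a relational atom. -/
inductive CyclicProof : ℕ → List HistoryEntry → SetSequent → Prop
  | ax {n H S} : IsAxiom S → CyclicProof n H S
  | infer {n H S prems} : Inference (tracked H) S prems →
      (∀ S' ∈ prems, CyclicProof n H S') → CyclicProof (n + 1) H S
  | push {n H S} (D : List ℕ) : tracked H <+: D →
      CyclicProof n (⟨S, D⟩ :: H) S → CyclicProof (n + 1) H S
  | rename {n H H' S S'} (f : ℕ → ℕ) : H' <:+ H → IsHom f S S' → (∀ x ∈ tracked H', f x = x) →
      CyclicProof n H' S → CyclicProof (n + 1) H S'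
  | jump {n H H' S} (e : HistoryEntry) (f : ℕ → ℕ) (p : ℕ) (hp : p < e.tracked.length) :
      (e :: H') <:+ H → IsHom f e.seq S → (∀ x ∈ e.tracked.take p, f x = x) →
      (e.tracked[p], f e.tracked[p]) ∈ S.rel → CyclicProof n H S

/-- Provability in the cyclic calculus relative to a history. -/
def Provable (H : List HistoryEntry) (S : SetSequent) : Prop := ∃ n, CyclicProof n H S

end CyclicCalculus

/-! ### Simulating the cyclic calculus in mℓIK4 -/

section Simulation

variable {P : Sequent → Prop} {ρ : ℕ → ℕ} {S : SetSequent} {Sa : Sequent}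

theorem Derives.of_mem_of_mem {R : Set (ℕ × ℕ)} {Γ Δ : Multiset LFormula} (hR : R.Finite)
    {a : LFormula} (hΓ : a ∈ Γ) (hΔ : a ∈ Δ) : Derives P ⟨R, Γ, Δ⟩ :=
  .of_subset (Multiset.singleton_subset.2 hΓ) (Multiset.singleton_subset.2 hΔ)
    (.identity a.2 hR a.1)

theorem IsAxiom.derives (hS : IsAxiom S) (hρ : IsHom ρ S Sa.toSetSequent) (hfin : Sa.rel.Finite) :
    Derives P Sa := by
  have left_cons {x A} (h : (x, A) ∈ S.left) : ∃ Γ, Sa = ⟨Sa.rel, (ρ x, A) ::ₘ Γ, Sa.right⟩ :=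
    let ⟨Γ, hΓ⟩ := Multiset.exists_cons_of_mem (hρ.left h)
    ⟨Γ, by rw [← hΓ]⟩
  have right_cons {x A} (h : (x, A) ∈ S.right) : ∃ Δ, Sa = ⟨Sa.rel, Sa.left, (ρ x, A) ::ₘ Δ⟩ :=
    let ⟨Δ, hΔ⟩ := Multiset.exists_cons_of_mem (hρ.right h)
    ⟨Δ, by rw [← hΔ]⟩
  have by_identity {R Γ Δ} {a : LFormula} (hR : R = Sa.rel) (hΓ : a ∈ Γ) (hΔ : a ∈ Δ) :
      Derives P ⟨R, Γ, Δ⟩ := .of_mem_of_mem (hR ▸ hfin) hΓ hΔ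
  cases hS with
  | id hl hr => exact .of_mem_of_mem hfin (hρ.left hl) (hρ.right hr)
  | botL hl =>
    obtain ⟨Γ, hSa⟩ := left_cons hl
    exact hSa ▸ .closed (Rule.botL _ _ _ _)
  | andL₁ hl hr =>
    obtain ⟨Γ, hSa⟩ := left_cons hl
    exact hSa ▸ .step_singleton (Rule.andL₁ _ _ _ _ _ _) subset_rfl
      (by_identity rfl (Multiset.mem_cons_self _ _) (hρ.right hr))
  | andL₂ hl hr =>
    obtain ⟨Γ, hSa⟩ := left_cons hl
    exact hSa ▸ .step_singleton (Rule.andL₂ _ _ _ _ _ _) subset_rfl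
      (by_identity rfl (Multiset.mem_cons_self _ _) (hρ.right hr))
  | andR hA hB hr =>
    obtain ⟨Δ, hSa⟩ := right_cons hr
    exact hSa ▸ .step_pair (Rule.andR _ _ _ _ _ _) subset_rfl subset_rfl
      (by_identity rfl (hρ.left hA) (Multiset.mem_cons_self _ _))
      (by_identity rfl (hρ.left hB) (Multiset.mem_cons_self _ _))
  | orL hl hA hB =>
    obtain ⟨Γ, hSa⟩ := left_cons hl
    exact hSa ▸ .step_pair (Rule.orL _ _ _ _ _ _) subset_rfl subset_rfl
      (by_identity rfl (Multiset.mem_cons_self _ _) (hρ.right hA))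
      (by_identity rfl (Multiset.mem_cons_self _ _) (hρ.right hB))
  | orR₁ hl hr =>
    obtain ⟨Δ, hSa⟩ := right_cons hr
    exact hSa ▸ .step_singleton (Rule.orR₁ _ _ _ _ _ _) subset_rfl
      (by_identity rfl (hρ.left hl) (Multiset.mem_cons_self _ _))
  | orR₂ hl hr =>
    obtain ⟨Δ, hSa⟩ := right_cons hr
    exact hSa ▸ .step_singleton (Rule.orR₂ _ _ _ _ _ _) subset_rfl
      (by_identity rfl (hρ.left hl) (Multiset.mem_cons_self _ _))
  | impL hl hA hB =>
    exact .of_subset (Multiset.cons_subset.2 ⟨hρ.left hl, Multiset.singleton_subset.2 (hρ.left hA)⟩)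
      (Multiset.singleton_subset.2 (hρ.right hB)) <|
      .step_pair (Rule.impL _ {_} 0 0 {_} _ _ _) subset_rfl subset_rfl
        (.identity _ hfin _) (.identity _ hfin _)
  | boxL hxy hl hr =>
    obtain ⟨Γ, hSa⟩ := left_cons hl
    exact hSa ▸ .step_singleton (Rule.boxL _ _ _ _ _ _ (hρ.rel hxy)) subset_rfl
      (by_identity rfl (Multiset.mem_cons_self _ _) (hρ.right hr))
  | diaR hxy hl hr =>
    obtain ⟨Δ, hSa⟩ := right_cons hr
    exact hSa ▸ .step_singleton (Rule.diaR _ _ _ _ _ _ (hρ.rel hxy)) subset_rfl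
      (by_identity rfl (hρ.left hl) (Multiset.mem_cons_self _ _))

theorem IsHom.congr {f g : ℕ → ℕ} {S S' : SetSequent} (hf : IsHom f S S')
    (hfg : ∀ z ∈ S.labels, g z = f z) : IsHom g S S' where
  rel x y h := by
    rw [hfg x (.inl (.inl ⟨y, .inl h⟩)), hfg y (.inl (.inl ⟨x, .inr h⟩))]
    exact hf.rel h
  left x A h := hfg x (.inl (.inr ⟨_, h, rfl⟩)) ▸ hf.left h
  right x A h := hfg x (.inr ⟨_, h, rfl⟩) ▸ hf.right h

section Extensions

variable {R R' : Set (ℕ × ℕ)} {L D : Set LFormula} {Γ Δ : Multiset LFormula}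

theorem IsHom.cons_left (h : IsHom ρ ⟨R, L, D⟩ (Sequent.toSetSequent ⟨R', Γ, Δ⟩)) (x : ℕ)
    (A : Formula) :
    IsHom ρ ⟨R, insert (x, A) L, D⟩ (Sequent.toSetSequent ⟨R', (ρ x, A) ::ₘ Γ, Δ⟩) := by
  refine ⟨h.rel, ?_, h.right⟩
  rintro z B (heq | hB)
  · obtain ⟨rfl, rfl⟩ := Prod.mk.inj heq
    exact Multiset.mem_cons_self _ _
  · exact Multiset.mem_cons_of_mem (h.left hB)

theorem IsHom.cons_right (h : IsHom ρ ⟨R, L, D⟩ (Sequent.toSetSequent ⟨R', Γ, Δ⟩)) (x : ℕ)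
    (A : Formula) :
    IsHom ρ ⟨R, L, insert (x, A) D⟩ (Sequent.toSetSequent ⟨R', Γ, (ρ x, A) ::ₘ Δ⟩) := by
  refine ⟨h.rel, h.left, ?_⟩
  rintro z B (heq | hB)
  · obtain ⟨rfl, rfl⟩ := Prod.mk.inj heq
    exact Multiset.mem_cons_self _ _
  · exact Multiset.mem_cons_of_mem (h.right hB)

theorem IsHom.singleton_right (h : IsHom ρ ⟨R, L, D⟩ (Sequent.toSetSequent ⟨R', Γ, Δ⟩)) (x : ℕ)
    (A : Formula) : IsHom ρ ⟨R, L, {(x, A)}⟩ (Sequent.toSetSequent ⟨R', Γ, {(ρ x, A)}⟩) := by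
  refine ⟨h.rel, h.left, ?_⟩
  rintro z B ⟨⟩
  exact Multiset.mem_singleton_self _

theorem IsHom.addChild (h : IsHom ρ ⟨R, L, D⟩ (Sequent.toSetSequent ⟨R', Γ, Δ⟩)) (x y : ℕ) :
    IsHom ρ ⟨IGL.addChild R x y, L, D⟩
      (Sequent.toSetSequent ⟨IGL.addChild R' (ρ x) (ρ y), Γ, Δ⟩) :=
  ⟨fun a _ hab => hab.imp (@h.rel _ _) fun ⟨hb, ha⟩ =>
    ⟨congrArg ρ hb, ha.imp (congrArg ρ) (@h.rel a x)⟩, h.left, h.right⟩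

end Extensions

theorem Sequent.vars_mono {R : Set (ℕ × ℕ)} {Γ Γ' Δ Δ' : Multiset LFormula} (hΓ : Γ' ⊆ Γ)
    (hΔ : Δ' ⊆ Δ) : Sequent.vars ⟨R, Γ', Δ'⟩ ⊆ Sequent.vars ⟨R, Γ, Δ⟩ :=
  Set.union_subset_union (Set.union_subset_union_right _ fun _ => Exists.imp fun _ h => hΓ h)
    fun _ => Exists.imp fun _ h => hΔ h

theorem IsHom.exists_eigenlabel (hρ : IsHom ρ S Sa.toSetSequent) (hfin : Sa.rel.Finite)
    {T : List ℕ} {y : ℕ} (hS : y ∉ S.labels) (hT : y ∉ T) :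
    ∃ ρ' : ℕ → ℕ, Fresh (ρ' y) Sa ∧ IsHom ρ' S Sa.toSetSequent ∧ ∀ z ∈ T, ρ' z = ρ z := by
  obtain ⟨y', hy'⟩ := (Sequent.vars_finite hfin).exists_notMem
  have hupd {z} (hz : z ≠ y) : Function.update ρ y y' z = ρ z := Function.update_of_ne hz _ _
  exact ⟨Function.update ρ y y', by rwa [Function.update_self],
    hρ.congr fun z hz => hupd (ne_of_mem_of_not_mem hz hS),
    fun z hz => hupd (ne_of_mem_of_not_mem hz hT)⟩

theorem Inference.derives {T : List ℕ} {prems : List SetSequent} (hinf : Inference T S prems)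
    (hρ : IsHom ρ S Sa.toSetSequent) (hfin : Sa.rel.Finite)
    (hP : ∀ S' ∈ prems, ∀ ρ' Sb, (∀ z ∈ T, ρ' z = ρ z) → Sb.rel.Finite →
      IsHom ρ' S' Sb.toSetSequent → P Sb) : Derives P Sa := by
  obtain ⟨R, Γ, Δ⟩ := Sa
  cases hinf with
  | cut x A =>
    refine .contract (Multiset.Subset.refl _) (Multiset.Subset.refl _) <|
      .step_pair (Rule.cut R Γ Γ Δ Δ (ρ x) A) subset_rfl subset_rfl (.leaf ?_) (.leaf ?_)
    · exact hP _ (by simp) ρ _ (fun _ _ => rfl) hfin (hρ.cons_right x A)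
    · exact hP _ (by simp) ρ _ (fun _ _ => rfl) hfin (hρ.cons_left x A)
  | @impR x A B h =>
    refine .of_subset (Multiset.Subset.refl _) (Multiset.singleton_subset.2 (hρ.right h)) <|
      .step_singleton (Rule.impR R Γ 0 _ _ _ fun _ => rfl) subset_rfl (.leaf ?_)
    exact hP _ (by simp) ρ _ (fun _ _ => rfl) hfin ((hρ.singleton_right x B).cons_left x A)
  | @diaL x y A h hy hyT =>
    obtain ⟨ρ', hfresh, hρ', heq⟩ := hρ.exists_eigenlabel hfin hy hyT
    have hsub : (ρ' x, A.dia) ::ₘ Γ ⊆ Γ :=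
      Multiset.cons_subset.2 ⟨hρ'.left h, Multiset.Subset.refl _⟩
    refine .of_subset hsub (Multiset.Subset.refl _) <| .step_singleton
      (Rule.diaL R Γ Δ _ (ρ' y) A
        fun hmem => hfresh (Sequent.vars_mono hsub (Multiset.Subset.refl _) hmem))
      (Set.subset_insert _ _) (.of_addChild hfin (.leaf ?_))
    exact hP _ (by simp) ρ' _ heq (addChild_finite hfin _ _) ((hρ'.addChild x y).cons_left y A)
  | @boxR x y A h hy hyT =>
    obtain ⟨ρ', hfresh, hρ', heq⟩ := hρ.exists_eigenlabel hfin hy hyT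
    have hsub : {(ρ' x, A.box)} ⊆ Δ := Multiset.singleton_subset.2 (hρ'.right h)
    refine .of_subset (Multiset.Subset.refl _) hsub <| .step_singleton
      (Rule.boxR R Γ 0 _ (ρ' y) A (fun _ => rfl)
        fun hmem => hfresh (Sequent.vars_mono (Multiset.Subset.refl _) hsub hmem))
      (Set.subset_insert _ _) (.of_addChild hfin (.leaf ?_))
    exact hP _ (by simp) ρ' _ heq (addChild_finite hfin _ _)
      ((hρ'.addChild x y).singleton_right y A)

end Simulation

/-! ### Soundness of the cyclic calculus -/

section Soundness

/-- The least height of a cyclic proof of `S` relative to `H`; it is `0` if there is none. -/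
noncomputable def proofRank (H : List HistoryEntry) (S : SetSequent) : ℕ :=
  sInf {n | CyclicProof n H S}

/-- The rank of the latest companion of a history. -/
noncomputable def topRank : List HistoryEntry → ℕ
  | [] => 0
  | e :: H => proofRank (e :: H) e.seq

/-- Every companion of the history is provable relative to the history up to it, its rank is bounded
in terms of `N` and its position, and the lists of tracked labels extend one another. -/
def HistoryOK (N : ℕ) (H : List HistoryEntry) : Prop :=
  ∀ e H', (e :: H') <:+ H → Provable (e :: H') e.seq ∧
    topRank (e :: H') + (e :: H').length ≤ N ∧ tracked H' <+: e.tracked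

/-- A stage of the unfolding of a cyclic proof into an ∞-proof: a provable sequent `seq` of the
cyclic calculus, realised through the renaming `env` by the sequent `real` of mℓIK4. -/
structure UnfoldState (N : ℕ) : Type where
  hist : List HistoryEntry
  seq : SetSequent
  env : ℕ → ℕ
  real : Sequent
  finite : real.rel.Finite
  hom : IsHom env seq real.toSetSequent
  provable : Provable hist seq
  rank_le : proofRank hist seq + hist.length ≤ N
  historyOK : HistoryOK N hist

namespace UnfoldState

variable {N : ℕ}

/-- The rank of the current sequent of a stage. -/
noncomputable def rank (m : UnfoldState N) : ℕ := proofRank m.hist m.seq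

/-- Passage from a stage to a premise, which may forget companions or record a new one. -/
structure Descends (m m' : UnfoldState N) : Prop where
  rank_lt : m'.rank < m.rank
  env_eq : ∀ z ∈ tracked m'.hist, m'.env z = m.env z
  hist : m'.hist <:+ m.hist ∨ (∃ e, m'.hist = e :: m.hist) ∧ topRank m'.hist = m'.rank

/-- Passage from a stage to one of its companions that makes progress at position `p`. -/
structure Jumps (p : ℕ) (m m' : UnfoldState N) : Prop where
  suffix : m'.hist <:+ m.hist
  topRank_eq : topRank m'.hist = m'.rank
  lt_length : p < (tracked m'.hist).length
  env_eq : ∀ z ∈ (tracked m'.hist).take p, m'.env z = m.env z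
  progress : (m.env (tracked m'.hist)[p], m'.env (tracked m'.hist)[p]) ∈ m.real.rel

/-- Passage from a stage to a next one. -/
def Next (m m' : UnfoldState N) : Prop := m.Descends m' ∨ ∃ p, m.Jumps p m'

end UnfoldState

theorem Provable.cyclicProof_proofRank {H : List HistoryEntry} {S : SetSequent}
    (h : Provable H S) : CyclicProof (proofRank H S) H S := Nat.sInf_mem h

theorem CyclicProof.proofRank_le {n : ℕ} {H : List HistoryEntry} {S : SetSequent}
    (h : CyclicProof n H S) : proofRank H S ≤ n := Nat.sInf_le h

theorem HistoryOK.of_suffix {N : ℕ} {H H' : List HistoryEntry} (h : HistoryOK N H)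
    (hH : H' <:+ H) : HistoryOK N H' := fun e H'' hs => h e H'' (hs.trans hH)

theorem HistoryOK.tracked_prefix {N : ℕ} {H H' : List HistoryEntry} (h : HistoryOK N H)
    (hH : H' <:+ H) : tracked H' <+: tracked H := by
  induction H with
  | nil => rw [List.suffix_nil.1 hH]
  | cons e H ih =>
    rcases List.suffix_cons_iff.1 hH with rfl | hH
    · exact List.prefix_rfl
    · exact (ih (h.of_suffix (List.suffix_cons e H)) hH).trans (h e H List.suffix_rfl).2.2

theorem HistoryOK.push {N n : ℕ} {H : List HistoryEntry} {S : SetSequent} {D : List ℕ}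
    (h : HistoryOK N H) (hD : tracked H <+: D) (hn : n + 1 + H.length ≤ N)
    (hproof : CyclicProof n (⟨S, D⟩ :: H) S) : HistoryOK N (⟨S, D⟩ :: H) := by
  intro e H' hs
  rcases List.suffix_cons_iff.1 hs with heq | hs
  · obtain ⟨rfl, rfl⟩ := List.cons.inj heq
    have := hproof.proofRank_le
    exact ⟨⟨n, hproof⟩, by simp only [topRank, List.length_cons]; omega, hD⟩
  · exact h e H' hs

theorem UnfoldState.derives {N : ℕ} (m : UnfoldState N) :
    Derives (fun Sb => ∃ m', m.Next m' ∧ m'.real = Sb) m.real := by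
  have descend {H S ρ Sb n} (hn : n + 1 = m.rank) (hproof : CyclicProof n H S)
      (hfin : Sb.rel.Finite) (hρ : IsHom ρ S Sb.toSetSequent)
      (henv : ∀ z ∈ tracked H, ρ z = m.env z) (hH : H <:+ m.hist) :
      ∃ m', m.Next m' ∧ m'.real = Sb := by
    have hrank := hproof.proofRank_le
    have hle : m.rank + m.hist.length ≤ N := m.rank_le
    have := hH.length_le
    exact ⟨⟨H, S, ρ, Sb, hfin, hρ, ⟨n, hproof⟩, by omega, m.historyOK.of_suffix hH⟩,
      .inl ⟨show proofRank H S < m.rank by omega, henv, .inl hH⟩, rfl⟩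
  have hproof := m.provable.cyclicProof_proofRank
  generalize hn : proofRank m.hist m.seq = n at hproof
  cases hproof with
  | ax h => exact h.derives m.hom m.finite
  | infer hinf hprems =>
    exact hinf.derives m.hom m.finite fun S' hS' ρ' Sb henv hfin hρ' =>
      descend hn.symm (hprems S' hS') hfin hρ' henv List.suffix_rfl
  | rename f hH hf hfix hproof =>
    exact .leaf (descend hn.symm hproof m.finite (m.hom.comp hf)
      (fun z hz => congrArg m.env (hfix z hz)) hH)
  | @push n _ _ D hD hproof =>
    have hrank := hproof.proofRank_le
    have hle : n + 1 + m.hist.length ≤ N := hn ▸ m.rank_le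
    exact .leaf ⟨⟨⟨m.seq, D⟩ :: m.hist, m.seq, m.env, m.real, m.finite, m.hom, ⟨n, hproof⟩,
      by rw [List.length_cons]; omega, m.historyOK.push hD hle hproof⟩,
      .inl ⟨show proofRank (⟨m.seq, D⟩ :: m.hist) m.seq < proofRank m.hist m.seq by omega,
        fun _ _ => rfl, .inr ⟨⟨_, rfl⟩, rfl⟩⟩, rfl⟩
  | jump e f p hp hs hf hfix hprog =>
    obtain ⟨hprov, hle, -⟩ := m.historyOK _ _ hs
    exact .leaf ⟨⟨_, e.seq, m.env ∘ f, m.real, m.finite, m.hom.comp hf, hprov, hle,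
      m.historyOK.of_suffix hs⟩,
      .inr ⟨p, hs, rfl, hp, fun z hz => congrArg m.env (hfix z hz), m.hom.rel hprog⟩, rfl⟩

open Filter in
theorem exists_recurrent_suffix {α : Type*} {l : ℕ → List α} {N : ℕ}
    (hbound : ∀ t, (l t).length ≤ N)
    (hstep : ∀ t, l (t + 1) <:+ l t ∨ ∃ a, l (t + 1) = a :: l t) :
    ∃ s, (∀ᶠ t in atTop, s <:+ l t) ∧ ∃ᶠ t in atTop, l t = s := by
  have hex : ∃ k, ∃ᶠ t in atTop, (l t).length ≤ k := ⟨N, .of_forall hbound⟩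
  classical
  have hge : ∀ᶠ t in atTop, Nat.find hex ≤ (l t).length := by
    rcases Nat.eq_zero_or_pos (Nat.find hex) with h0 | hpos
    · exact .of_forall fun t => h0 ▸ Nat.zero_le _
    · filter_upwards [not_frequently.1 (Nat.find_min hex (Nat.sub_lt hpos one_pos))] with t ht
      omega
  obtain ⟨t₀, ht₀⟩ := eventually_atTop.1 hge
  obtain ⟨t₁, ht₁, hlen⟩ := frequently_atTop.1 (Nat.find_spec hex) t₀
  have hsuffix : ∀ t ≥ t₁, l t₁ <:+ l t := fun t ht => by
    induction t, ht using Nat.le_induction with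
    | base => exact List.suffix_rfl
    | succ t ht ih =>
      rcases hstep t with hpop | ⟨a, hpush⟩
      · exact List.suffix_of_suffix_length_le ih hpop (hlen.trans (ht₀ _ (by omega)))
      · exact hpush ▸ ih.trans (List.suffix_cons a _)
  refine ⟨l t₁, eventually_atTop.2 ⟨t₁, hsuffix⟩, ?_⟩
  refine ((Nat.find_spec hex).and_eventually (eventually_ge_atTop t₁)).mono fun t ht => ?_
  exact ((hsuffix t ht.2).eq_of_length_le (ht.1.trans (ht₀ _ ht₁))).symm

namespace UnfoldState

variable {N : ℕ}

theorem Next.hist_cases {m m' : UnfoldState N} (h : m.Next m') :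
    m'.hist <:+ m.hist ∨ ∃ e, m'.hist = e :: m.hist := by
  rcases h with h | ⟨p, h⟩
  · exact h.hist.imp_right And.left
  · exact .inl h.suffix

/-- All ranks that a run can reach from `m` without jumping to `s` are below `r`. -/
def BoundedAbove (s : List HistoryEntry) (r : ℕ) (m : UnfoldState N) : Prop :=
  m.rank < r ∧ ∀ H, H <:+ m.hist → s <:+ H → H ≠ s → topRank H < r

theorem BoundedAbove.of_descends {s : List HistoryEntry} {r : ℕ} {m m' : UnfoldState N}
    (hrank : m.rank ≤ r) (hhist : ∀ H, H <:+ m.hist → s <:+ H → H ≠ s → topRank H < r)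
    (h : m.Descends m') : m'.BoundedAbove s r := by
  refine ⟨h.rank_lt.trans_le hrank, fun H hH hs hne => ?_⟩
  rcases h.hist with hpop | ⟨⟨e, hpush⟩, htop⟩
  · exact hhist H (hH.trans hpop) hs hne
  · rcases List.suffix_cons_iff.1 (hpush ▸ hH) with heq | hH
    · rw [heq, ← hpush, htop]
      exact h.rank_lt.trans_le hrank
    · exact hhist H hH hs hne

theorem BoundedAbove.of_next {s : List HistoryEntry} {r : ℕ} {m m' : UnfoldState N}
    (hm : m.BoundedAbove s r) (h : m.Next m') (hs : s <:+ m'.hist)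
    (hjump : ¬ ∃ p, m.Jumps p m' ∧ m'.hist = s) : m'.BoundedAbove s r := by
  rcases h with h | ⟨p, h⟩
  · exact .of_descends hm.1.le hm.2 h
  · have hne : m'.hist ≠ s := fun heq => hjump ⟨p, h, heq⟩
    exact ⟨h.topRank_eq ▸ hm.2 _ h.suffix hs hne, fun H hH => hm.2 H (hH.trans h.suffix)⟩

open Filter in
theorem exists_recurrent_jump {μ : ℕ → UnfoldState N} (hμ : ∀ t, (μ t).Next (μ (t + 1))) :
    ∃ s, (∀ᶠ t in atTop, s <:+ (μ t).hist) ∧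
      ∃ᶠ t in atTop, ∃ p, (μ t).Jumps p (μ (t + 1)) ∧ (μ (t + 1)).hist = s := by
  obtain ⟨s, hev, hfreq⟩ := exists_recurrent_suffix (l := fun t => (μ t).hist)
    (fun t => (Nat.le_add_left _ _).trans (μ t).rank_le) fun t => (hμ t).hist_cases
  refine ⟨s, hev, by_contra fun hno => ?_⟩
  obtain ⟨t₀, ht₀⟩ := eventually_atTop.1 (hev.and (not_frequently.1 hno))
  -- Among the visits to `s` after the last jump to `s`, consider one of minimal rank.
  obtain ⟨t₁, ⟨ht₁, hvisit⟩, hmin⟩ := exists_minimalFor_of_wellFoundedLT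
    (fun t => t₀ ≤ t ∧ (μ t).hist = s) (fun t => (μ t).rank) (frequently_atTop.1 hfreq t₀)
  have hbounded : ∀ t > t₁, (μ t).BoundedAbove s (μ t₁).rank := fun t ht => by
    induction t, ht using Nat.le_induction with
    | base =>
      rcases hμ t₁ with hdesc | ⟨p, hjump⟩
      · exact .of_descends le_rfl
          (fun H hH hs hne => absurd (hs.eq_of_length_le (hvisit ▸ hH.length_le)).symm hne) hdesc
      · exact absurd ⟨p, hjump, (ht₀ (t₁ + 1) (by omega)).1.eq_of_length_le
          (hvisit ▸ hjump.suffix.length_le) |>.symm⟩ (ht₀ t₁ ht₁).2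
    | succ t ht ih =>
      exact ih.of_next (hμ t) (ht₀ (t + 1) (by omega)).1 (ht₀ t (by omega)).2
  obtain ⟨t₂, ht₂, hvisit₂⟩ := frequently_atTop.1 hfreq (t₁ + 1)
  have hlt := (hbounded t₂ ht₂).1
  exact absurd (hmin ⟨by omega, hvisit₂⟩ hlt.le) (not_le.2 hlt)

theorem Next.env_eq_or_mem_rel {m m' : UnfoldState N} (h : m.Next m') {p : ℕ}
    (hp : p < (tracked m'.hist).length) (hge : ∀ q, m.Jumps q m' → p ≤ q) :
    m'.env (tracked m'.hist)[p] = m.env (tracked m'.hist)[p] ∨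
      (m.env (tracked m'.hist)[p], m'.env (tracked m'.hist)[p]) ∈ m.real.rel := by
  rcases h with h | ⟨q, h⟩
  · exact .inl (h.env_eq _ (List.getElem_mem hp))
  · rcases (hge q h).eq_or_lt with rfl | hlt
    · exact .inr h.progress
    · exact .inl (h.env_eq _ (List.mem_take_iff_getElem.2 ⟨p, by omega, rfl⟩))

open Filter in
theorem exists_recurrent_position {μ : ℕ → UnfoldState N} {s : List HistoryEntry}
    (hfreq : ∃ᶠ t in atTop, ∃ p, (μ t).Jumps p (μ (t + 1)) ∧ (μ (t + 1)).hist = s) :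
    ∃ p < (tracked s).length, (∃ᶠ t in atTop, (μ t).Jumps p (μ (t + 1))) ∧
      ∀ᶠ t in atTop, ∀ q, (μ t).Jumps q (μ (t + 1)) → p ≤ q := by
  classical
  have hex : ∃ p, ∃ᶠ t in atTop, ∃ q ≤ p, (μ t).Jumps q (μ (t + 1)) :=
    ⟨(tracked s).length, hfreq.mono fun t ⟨q, hq, hs⟩ => ⟨q, hs ▸ hq.lt_length.le, hq⟩⟩
  have hge : ∀ᶠ t in atTop, ∀ q, (μ t).Jumps q (μ (t + 1)) → Nat.find hex ≤ q := by
    rcases Nat.eq_zero_or_pos (Nat.find hex) with h0 | hpos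
    · exact .of_forall fun t q _ => h0 ▸ Nat.zero_le q
    · filter_upwards [not_frequently.1 (Nat.find_min hex (Nat.sub_lt hpos one_pos))] with t ht q hq
      exact not_lt.1 fun hlt => ht ⟨q, by omega, hq⟩
  obtain ⟨t, ⟨q, hq, hs⟩, ht⟩ := (hfreq.and_eventually hge).exists
  refine ⟨Nat.find hex, (ht q hq).trans_lt (hs ▸ hq.lt_length), ?_, hge⟩
  refine ((Nat.find_spec hex).and_eventually hge).mono fun t ⟨⟨q, hle, hq⟩, ht⟩ => ?_
  exact hle.antisymm (ht q hq) ▸ hq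

open Filter in
theorem exists_path {μ : ℕ → UnfoldState N} (hμ : ∀ t, (μ t).Next (μ (t + 1))) :
    ∃ y : ℕ → ℕ, ∀ j, ∃ i, (y j, y (j + 1)) ∈ (μ i).real.rel := by
  obtain ⟨s, hev, hfreq⟩ := exists_recurrent_jump hμ
  obtain ⟨p, hp, hjump, hge⟩ := exists_recurrent_position hfreq
  obtain ⟨k, hk⟩ := eventually_atTop.1 (hev.and hge)
  have tracked_eq : ∀ t ≥ k, ∃ hp' : p < (tracked (μ (t + 1)).hist).length,
      (tracked s)[p] = (tracked (μ (t + 1)).hist)[p] := fun t ht =>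
    have hpre := (μ (t + 1)).historyOK.tracked_prefix (hk (t + 1) (by omega)).1
    ⟨hp.trans_le hpre.length_le, hpre.getElem hp⟩
  refine exists_path_of_weak_path (E := fun t a b => (a, b) ∈ (μ t).real.rel)
    (a := fun t => (μ t).env (tracked s)[p]) (k := k) (fun t ht => ?_) fun n => ?_
  · obtain ⟨hp', heq⟩ := tracked_eq t ht
    simp only [heq]
    exact (hμ t).env_eq_or_mem_rel hp' (hk t ht).2
  · obtain ⟨t, ht, hprog⟩ := frequently_atTop.1 hjump (max n k)
    obtain ⟨hp', heq⟩ := tracked_eq t ((le_max_right _ _).trans ht)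
    refine ⟨t, (le_max_left _ _).trans ht, ?_⟩
    simp only [heq]
    exact hprog.progress

end UnfoldState

theorem InfProof.of_provable {S : Sequent}
    (h : Provable [] ⟨∅, {a | a ∈ S.left}, {a | a ∈ S.right}⟩) : InfProof RuleMLIK4 S := by
  let start : UnfoldState (proofRank [] ⟨∅, {a | a ∈ S.left}, {a | a ∈ S.right}⟩) :=
    { hist := []
      seq := _
      env := id
      real := ⟨∅, S.left, S.right⟩
      finite := Set.finite_empty
      hom := .of_subset subset_rfl subset_rfl subset_rfl
      provable := h
      rank_le := le_rfl
      historyOK := fun e H' hs => absurd (List.suffix_nil.1 hs) (List.cons_ne_nil e H') }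
  refine .of_derives UnfoldState.derives start (fun μ _ hμ => UnfoldState.exists_path hμ) ?_
  have hth := Rule.th (tr := true) (thn := true) (ir := true) ∅ S.rel S.left S.right rfl
  rwa [Set.empty_union] at hth

end Soundness

/-! ### Derived rules of the cyclic calculus -/

section DerivedRules

theorem CyclicProof.mono {n m : ℕ} {H : List HistoryEntry} {S : SetSequent}
    (h : CyclicProof n H S) (hnm : n ≤ m) : CyclicProof m H S := by
  induction h generalizing m with
  | ax h => exact .ax h
  | infer hinf _ ih =>
    obtain ⟨m, rfl⟩ := Nat.exists_eq_add_one.2 (Nat.zero_lt_of_lt hnm)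
    exact .infer hinf fun S' hS' => ih S' hS' (by omega)
  | push D hD _ ih =>
    obtain ⟨m, rfl⟩ := Nat.exists_eq_add_one.2 (Nat.zero_lt_of_lt hnm)
    exact .push D hD (ih (by omega))
  | rename f hH hf hfix _ ih =>
    obtain ⟨m, rfl⟩ := Nat.exists_eq_add_one.2 (Nat.zero_lt_of_lt hnm)
    exact .rename f hH hf hfix (ih (by omega))
  | jump e f p hp hH hf hfix hprog => exact .jump e f p hp hH hf hfix hprog

namespace Provable

variable {H H' : List HistoryEntry} {R R' : Set (ℕ × ℕ)} {L L' Δ Δ' : Set LFormula}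
  {S S' : SetSequent} {x y : ℕ} {A B : Formula}

theorem of_isAxiom (h : IsAxiom S) : Provable H S := ⟨0, .ax h⟩

theorem of_inference {prems : List SetSequent} (h : Inference (tracked H) S prems)
    (hprems : ∀ S' ∈ prems, Provable H S') : Provable H S :=
  let ⟨n, hn⟩ := exists_forall_mem_of_monotone (Q := fun n => CyclicProof n H)
    (fun _ _ _ hle hproof => hproof.mono hle) hprems
  ⟨n + 1, .infer h hn⟩

theorem rename (h : Provable H S) {f : ℕ → ℕ} (hH : H <:+ H') (hf : IsHom f S S')
    (hfix : ∀ x ∈ tracked H, f x = x) : Provable H' S' :=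
  let ⟨n, hn⟩ := h
  ⟨n + 1, .rename f hH hf hfix hn⟩

theorem mono (h : Provable H ⟨R, L, Δ⟩) (hH : H <:+ H') (hR : R ⊆ R') (hL : L ⊆ L')
    (hΔ : Δ ⊆ Δ') : Provable H' ⟨R', L', Δ'⟩ :=
  h.rename hH (.of_subset hR hL hΔ) fun _ _ => rfl

theorem push {D : List ℕ} (hD : tracked H <+: D) (h : Provable (⟨S, D⟩ :: H) S) : Provable H S :=
  let ⟨n, hn⟩ := h
  ⟨n + 1, .push D hD hn⟩

theorem cut (h : Provable H ⟨R, L, {(x, A)}⟩) (h' : Provable H ⟨R, insert (x, A) L, Δ⟩) :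
    Provable H ⟨R, L, Δ⟩ :=
  have h : Provable H ⟨R, L, insert (x, A) Δ⟩ := h.mono List.suffix_rfl subset_rfl subset_rfl
    (Set.singleton_subset_iff.2 (Set.mem_insert _ _))
  of_inference (.cut x A) (List.forall_mem_cons.2 ⟨h, List.forall_mem_singleton.2 h'⟩)

theorem orL (h : (x, A.or B) ∈ L) (hA : Provable H ⟨R, insert (x, A) L, Δ⟩)
    (hB : Provable H ⟨R, insert (x, B) L, Δ⟩) : Provable H ⟨R, L, Δ⟩ := by
  have hor : Provable H ⟨R, L, insert (x, B) (insert (x, A) Δ)⟩ :=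
    of_isAxiom (.orL h (Set.mem_insert_of_mem _ (Set.mem_insert _ _)) (Set.mem_insert _ _))
  have hB' : Provable H ⟨R, insert (x, B) L, insert (x, A) Δ⟩ :=
    hB.mono List.suffix_rfl subset_rfl subset_rfl (Set.subset_insert _ _)
  refine of_inference (.cut x A) (List.forall_mem_cons.2 ⟨?_, List.forall_mem_singleton.2 hA⟩)
  exact of_inference (.cut x B) (List.forall_mem_cons.2 ⟨hor, List.forall_mem_singleton.2 hB'⟩)

theorem diaL (h : (x, A.dia) ∈ L) (hy : y ∉ SetSequent.labels ⟨R, L, Δ⟩) (hy' : y ∉ tracked H)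
    (hprem : Provable H ⟨addChild R x y, insert (y, A) L, Δ⟩) : Provable H ⟨R, L, Δ⟩ :=
  of_inference (.diaL h hy hy') (List.forall_mem_singleton.2 hprem)

theorem boxR (hy : y ∉ SetSequent.labels ⟨R, L, {(x, A.box)}⟩) (hy' : y ∉ tracked H)
    (hprem : Provable H ⟨addChild R x y, L, {(y, A)}⟩) : Provable H ⟨R, L, {(x, A.box)}⟩ :=
  of_inference (.boxR rfl hy hy') (List.forall_mem_singleton.2 hprem)

theorem impR (hprem : Provable H ⟨R, insert (x, A) L, {(x, B)}⟩) :
    Provable H ⟨R, L, {(x, A.imp B)}⟩ :=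
  of_inference (.impR rfl) (List.forall_mem_singleton.2 hprem)

end Provable

end DerivedRules

/-! ### Labelled forests -/

/-- A transitive relation on `V` in which the predecessors of a node are comparable, and smaller as
numbers. -/
structure IsForest (V : Finset ℕ) (R : Set (ℕ × ℕ)) : Prop where
  mem_nodes : ∀ ⦃a b⦄, (a, b) ∈ R → a ∈ V ∧ b ∈ V
  lt : ∀ ⦃a b⦄, (a, b) ∈ R → a < b
  trans : ∀ ⦃a b c⦄, (a, b) ∈ R → (b, c) ∈ R → (a, c) ∈ R
  comparable : ∀ ⦃a b c⦄, (a, c) ∈ R → (b, c) ∈ R → a = b ∨ (a, b) ∈ R ∨ (b, a) ∈ R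

/-- A finite set of labels with a relation and labelled formulas: the left-hand side of a sequent,
seen as a stage in the construction of a countermodel. -/
structure Forest : Type where
  nodes : Finset ℕ
  rel : Set (ℕ × ℕ)
  formulas : Set LFormula

/-- A set of formulas closed under subformulas. -/
structure SubformulaClosed (F : Finset Formula) : Prop where
  and : ∀ ⦃A B⦄, Formula.and A B ∈ F → A ∈ F ∧ B ∈ F
  or : ∀ ⦃A B⦄, Formula.or A B ∈ F → A ∈ F ∧ B ∈ F
  imp : ∀ ⦃A B⦄, Formula.imp A B ∈ F → A ∈ F ∧ B ∈ F
  box : ∀ ⦃A⦄, Formula.box A ∈ F → A ∈ F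
  dia : ∀ ⦃A⦄, Formula.dia A ∈ F → A ∈ F

namespace Forest

instance : Preorder Forest where
  le T T' := T.nodes ⊆ T'.nodes ∧ T.rel ⊆ T'.rel ∧ T.formulas ⊆ T'.formulas
  le_refl _ := ⟨subset_rfl, subset_rfl, subset_rfl⟩
  le_trans _ _ _ h h' := ⟨h.1.trans h'.1, h.2.1.trans h'.2.1, h.2.2.trans h'.2.2⟩

/-- The sequent with left-hand side `T` and right-hand side `Δ`. -/
abbrev sequent (T : Forest) (Δ : Set LFormula) : SetSequent := ⟨T.rel, T.formulas, Δ⟩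

/-- The extension of a forest by the labelled formula `x : A`. -/
def addFormula (T : Forest) (x : ℕ) (A : Formula) : Forest :=
  ⟨T.nodes, T.rel, insert (x, A) T.formulas⟩

/-- The extension of a forest by a child `y` of the node `x`. -/
def addNode (T : Forest) (x y : ℕ) : Forest :=
  ⟨insert y T.nodes, addChild T.rel x y, T.formulas⟩

/-- The extension of a forest by a child `y` of the node `x` at which `B` holds. -/
def addWitness (T : Forest) (x y : ℕ) (B : Formula) : Forest := (T.addNode x y).addFormula y B

/-- The labelled formulas of a forest are formulas of `F` at nodes. -/
structure WellFormed (F : Finset Formula) (T : Forest) : Prop extends IsForest T.nodes T.rel where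
  formulas : ∀ ⦃x A⦄, (x, A) ∈ T.formulas → x ∈ T.nodes ∧ A ∈ F

variable {F : Finset Formula} {T T' : Forest} {Δ : Set LFormula} {x y : ℕ} {A B : Formula}

theorem le_addFormula : T ≤ T.addFormula x A := ⟨subset_rfl, subset_rfl, Set.subset_insert _ _⟩

theorem le_addNode : T ≤ T.addNode x y :=
  ⟨Finset.subset_insert _ _, Set.subset_union_left, subset_rfl⟩

theorem le_addWitness : T ≤ T.addWitness x y B := le_addNode.trans le_addFormula

theorem mem_rel_addNode : (x, y) ∈ (T.addNode x y).rel := .inr ⟨rfl, .inl rfl⟩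

theorem WellFormed.addFormula (hT : T.WellFormed F) (hx : x ∈ T.nodes) (hA : A ∈ F) :
    (T.addFormula x A).WellFormed F where
  toIsForest := hT.toIsForest
  formulas := by
    rintro z C (heq | hz)
    · obtain ⟨rfl, rfl⟩ := Prod.mk.inj heq
      exact ⟨hx, hA⟩
    · exact hT.formulas hz

theorem WellFormed.addNode (hT : T.WellFormed F) (hx : x ∈ T.nodes) (hy : ∀ v ∈ T.nodes, v < y) :
    (T.addNode x y).WellFormed F where
  mem_nodes := by
    rintro a b (hab | ⟨rfl, rfl | hax⟩)
    · exact (hT.mem_nodes hab).imp (Finset.mem_insert_of_mem ·) (Finset.mem_insert_of_mem ·)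
    · exact ⟨Finset.mem_insert_of_mem hx, Finset.mem_insert_self _ _⟩
    · exact ⟨Finset.mem_insert_of_mem (hT.mem_nodes hax).1, Finset.mem_insert_self _ _⟩
  lt := by
    rintro a b (hab | ⟨rfl, rfl | hax⟩)
    · exact hT.lt hab
    · exact hy _ hx
    · exact hy _ (hT.mem_nodes hax).1
  trans := by
    rintro a b c (hab | ⟨hb, -⟩) (hbc | ⟨rfl, rfl | hbx⟩)
    · exact .inl (hT.trans hab hbc)
    · exact .inr ⟨rfl, .inr hab⟩
    · exact .inr ⟨rfl, .inr (hT.trans hab hbx)⟩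
    · exact absurd hb (hy _ (hT.mem_nodes hbc).1).ne
    · exact absurd hb (hy _ hx).ne
    · exact absurd hb (hy _ (hT.mem_nodes hbx).1).ne
  comparable := by
    rintro a b c (hac | ⟨rfl, hac⟩) (hbc | ⟨hc, hbc⟩)
    · exact (hT.comparable hac hbc).imp_right (Or.imp .inl .inl)
    · exact absurd hc (hy _ (hT.mem_nodes hac).2).ne
    · exact absurd (hy _ (hT.mem_nodes hbc).2) (lt_irrefl _)
    · rcases hac with rfl | hac <;> rcases hbc with rfl | hbc
      · exact .inl rfl
      · exact .inr (.inr (.inl hbc))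
      · exact .inr (.inl (.inl hac))
      · exact (hT.comparable hac hbc).imp_right (Or.imp .inl .inl)
  formulas := fun z A hz => (hT.formulas hz).imp_left (Finset.mem_insert_of_mem ·)

theorem WellFormed.addWitness (hT : T.WellFormed F) (hx : x ∈ T.nodes)
    (hy : ∀ v ∈ T.nodes, v < y) (hB : B ∈ F) : (T.addWitness x y B).WellFormed F :=
  (hT.addNode hx hy).addFormula (Finset.mem_insert_self _ _) hB

theorem WellFormed.notMem_labels (hT : T.WellFormed F) (hΔ : ∀ a ∈ Δ, a.1 ∈ T.nodes)
    (hy : y ∉ T.nodes) : y ∉ (T.sequent Δ).labels := by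
  rintro ((⟨w, hw | hw⟩ | ⟨a, ha, rfl⟩) | ⟨a, ha, rfl⟩)
  · exact hy (hT.mem_nodes hw).1
  · exact hy (hT.mem_nodes hw).2
  · exact hy (hT.formulas ha).1
  · exact hy (hΔ a ha)

theorem exists_fresh (T : Forest) (l : List ℕ) : ∃ y ∉ l, ∀ v ∈ T.nodes, v < y := by
  refine ⟨T.nodes.sup id + l.sum + 1, fun hy => ?_, fun v hv => ?_⟩
  · have := List.le_sum_of_mem hy
    omega
  · have : v ≤ T.nodes.sup id := Finset.le_sup (f := id) hv
    omega

end Forest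

/-! ### Saturation -/

section Saturation

/-- A saturation step: adding a formula provable relative to `H`, a disjunct of a disjunction, or
a witness for a diamond. -/
inductive Step (F : Finset Formula) (H : List HistoryEntry) (T : Forest) : Forest → Prop
  | add {x : ℕ} {A : Formula} : x ∈ T.nodes → A ∈ F → (x, A) ∉ T.formulas →
      Provable H (T.sequent {(x, A)}) → Step F H T (T.addFormula x A)
  | or {x : ℕ} {A B C : Formula} : (x, A.or B) ∈ T.formulas → (x, A) ∉ T.formulas →
      (x, B) ∉ T.formulas → C = A ∨ C = B → Step F H T (T.addFormula x C)
  | dia {x y : ℕ} {B : Formula} : (x, B.dia) ∈ T.formulas →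
      (∀ z, (x, z) ∈ T.rel → (z, B) ∉ T.formulas) → (∀ v ∈ T.nodes, v < y) →
      Step F H T (T.addWitness x y B)

/-- A forest to which no saturation step applies. -/
structure Saturated (F : Finset Formula) (H : List HistoryEntry) (T : Forest) : Prop where
  closed : ∀ ⦃x A⦄, x ∈ T.nodes → A ∈ F → Provable H (T.sequent {(x, A)}) → (x, A) ∈ T.formulas
  prime : ∀ ⦃x A B⦄, (x, Formula.or A B) ∈ T.formulas →
    (x, A) ∈ T.formulas ∨ (x, B) ∈ T.formulas
  witness : ∀ ⦃x B⦄, (x, Formula.dia B) ∈ T.formulas → ∃ y, (x, y) ∈ T.rel ∧ (y, B) ∈ T.formulas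

variable {F : Finset Formula} {H : List HistoryEntry} {T T' : Forest} {Δ : Set LFormula}
  {x y : ℕ} {A B : Formula}

theorem Step.wellFormed (hF : SubformulaClosed F) (h : Step F H T T') (hT : T.WellFormed F) :
    T'.WellFormed F := by
  cases h with
  | add hx hA _ _ => exact hT.addFormula hx hA
  | or hor _ _ hC =>
    obtain ⟨hx, hAB⟩ := hT.formulas hor
    rcases hC with rfl | rfl
    · exact hT.addFormula hx (hF.or hAB).1
    · exact hT.addFormula hx (hF.or hAB).2
  | dia hdia _ hy =>
    obtain ⟨hx, hB⟩ := hT.formulas hdia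
    exact hT.addWitness hx hy (hF.dia hB)

open Classical in
/-- The number of formulas of `F` missing at `x` plus the number of those without a witness above
`x`, shifted by one to be positive. -/
noncomputable def deficit (F : Finset Formula) (T : Forest) (x : ℕ) : ℕ :=
  (F.filter fun A => (x, A) ∉ T.formulas).card +
    (F.filter fun A => ∀ z, (x, z) ∈ T.rel → (z, A) ∉ T.formulas).card + 1

open Classical in
theorem missing_subset (hT : T ≤ T') : (F.filter fun A => (x, A) ∉ T'.formulas) ⊆
    F.filter fun A => (x, A) ∉ T.formulas :=
  Finset.monotone_filter_right F fun _ _ hA h => hA (hT.2.2 h)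

open Classical in
theorem unwitnessed_subset (hT : T ≤ T') :
    (F.filter fun A => ∀ z, (x, z) ∈ T'.rel → (z, A) ∉ T'.formulas) ⊆
      F.filter fun A => ∀ z, (x, z) ∈ T.rel → (z, A) ∉ T.formulas :=
  Finset.monotone_filter_right F fun _ _ hA z hz h => hA z (hT.2.1 hz) (hT.2.2 h)

theorem deficit_le_of_le (hT : T ≤ T') : deficit F T' x ≤ deficit F T x := by
  classical
  have hmissing := Finset.card_le_card (missing_subset (F := F) (x := x) hT)
  have hunwitnessed := Finset.card_le_card (unwitnessed_subset (F := F) (x := x) hT)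
  unfold deficit
  omega

theorem deficit_addFormula_lt (hA : A ∈ F) (hx : (x, A) ∉ T.formulas) :
    deficit F (T.addFormula x A) x < deficit F T x := by
  classical
  have hle : T ≤ T.addFormula x A := Forest.le_addFormula
  have hmissing := Finset.card_lt_card ((missing_subset (F := F) (x := x) hle).ssubset_of_mem_notMem
    (Finset.mem_filter.2 ⟨hA, hx⟩) fun h => (Finset.mem_filter.1 h).2 (Set.mem_insert _ _))
  have hunwitnessed := Finset.card_le_card (unwitnessed_subset (F := F) (x := x) hle)
  unfold deficit
  omega

theorem deficit_addWitness_lt (hB : B ∈ F) (hx : ∀ z, (x, z) ∈ T.rel → (z, B) ∉ T.formulas) :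
    deficit F (T.addWitness x y B) x < deficit F T x := by
  classical
  have hle : T ≤ T.addWitness x y B := Forest.le_addWitness
  have hmissing := Finset.card_le_card (missing_subset (F := F) (x := x) hle)
  have hunwitnessed := Finset.card_lt_card
    ((unwitnessed_subset (F := F) (x := x) hle).ssubset_of_mem_notMem (Finset.mem_filter.2 ⟨hB, hx⟩)
      fun h => (Finset.mem_filter.1 h).2 y Forest.mem_rel_addNode (Set.mem_insert _ _))
  unfold deficit
  omega

theorem deficit_lt (hA : A ∈ F) (hx : (x, A) ∈ T.formulas) : deficit F T x < 2 * F.card + 1 := by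
  classical
  have hmissing : (F.filter fun A => (x, A) ∉ T.formulas).card < F.card :=
    Finset.card_lt_card (Finset.filter_ssubset.2 ⟨A, hA, not_not_intro hx⟩)
  have hunwitnessed := F.card_filter_le fun A => ∀ z, (x, z) ∈ T.rel → (z, A) ∉ T.formulas
  unfold deficit
  omega

/-- The weight of a node at which the formulas in `K` are blocked, that is, may no longer be
witnessed by new nodes above it. -/
def blockWeight (F K : Finset Formula) : ℕ := (2 * F.card + 1) ^ (F.card - K.card)

theorem blockWeight_pos (F K : Finset Formula) : 0 < blockWeight F K := by
  unfold blockWeight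
  positivity

open Classical in
theorem blockWeight_insert {K : Finset Formula} (hK : K ⊆ F) (hB : B ∈ F) (hBK : B ∉ K) :
    blockWeight F K = blockWeight F (insert B K) * (2 * F.card + 1) := by
  have hle := Finset.card_le_card (Finset.insert_subset hB hK)
  rw [Finset.card_insert_of_notMem hBK] at hle
  rw [blockWeight, blockWeight, Finset.card_insert_of_notMem hBK, ← pow_succ]
  congr 1
  omega

/-- The measure that decreases during saturation when the formulas in `K x` are blocked at `x`. -/
noncomputable def forestMeasure (F : Finset Formula) (K : ℕ → Finset Formula) (T : Forest) : ℕ :=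
  ∑ x ∈ T.nodes, blockWeight F (K x) * deficit F T x

theorem sum_mul_add_le_sum_mul {ι : Type*} {s : Finset ι} {w d d' : ι → ℕ} {i : ι} (hi : i ∈ s)
    (hle : ∀ j ∈ s, d' j ≤ d j) (hlt : d' i < d i) :
    ∑ j ∈ s, w j * d' j + w i ≤ ∑ j ∈ s, w j * d j := by
  classical
  rw [← Finset.add_sum_erase s _ hi, ← Finset.add_sum_erase s (fun j => w j * d j) hi]
  have hrest : ∑ j ∈ s.erase i, w j * d' j ≤ ∑ j ∈ s.erase i, w j * d j :=
    Finset.sum_le_sum fun j hj => Nat.mul_le_mul_left _ (hle j (Finset.mem_of_mem_erase hj))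
  have hterm : w i * d' i + w i ≤ w i * d i := Nat.mul_le_mul_left (w i) hlt
  omega

variable {K : ℕ → Finset Formula}

theorem forestMeasure_addFormula_lt (hx : x ∈ T.nodes) (hA : A ∈ F) (hxA : (x, A) ∉ T.formulas) :
    forestMeasure F K (T.addFormula x A) < forestMeasure F K T :=
  (Nat.lt_add_of_pos_right (blockWeight_pos F (K x))).trans_le <| sum_mul_add_le_sum_mul hx
    (fun _ _ => deficit_le_of_le Forest.le_addFormula) (deficit_addFormula_lt hA hxA)

open Classical in
theorem forestMeasure_addWitness_lt (hx : x ∈ T.nodes) (hB : B ∈ F)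
    (hxB : ∀ z, (x, z) ∈ T.rel → (z, B) ∉ T.formulas) (hy : y ∉ T.nodes) (hK : K x ⊆ F)
    (hBK : B ∉ K x) :
    forestMeasure F (Function.update K y (insert B (K x))) (T.addWitness x y B) <
      forestMeasure F K T := by
  have hnew : blockWeight F (insert B (K x)) * deficit F (T.addWitness x y B) y <
      blockWeight F (K x) := by
    rw [blockWeight_insert hK hB hBK]
    exact Nat.mul_lt_mul_of_pos_left (deficit_lt hB (Set.mem_insert _ _)) (blockWeight_pos F _)
  have hold : ∑ z ∈ T.nodes, blockWeight F (K z) * deficit F (T.addWitness x y B) z +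
      blockWeight F (K x) ≤ forestMeasure F K T :=
    sum_mul_add_le_sum_mul hx (fun _ _ => deficit_le_of_le Forest.le_addWitness)
      (deficit_addWitness_lt hB hxB)
  have hsplit : forestMeasure F (Function.update K y (insert B (K x))) (T.addWitness x y B) =
      blockWeight F (insert B (K x)) * deficit F (T.addWitness x y B) y +
        ∑ z ∈ T.nodes, blockWeight F (K z) * deficit F (T.addWitness x y B) z := by
    refine (Finset.sum_insert hy).trans ?_
    rw [Function.update_self]
    refine congrArg _ (Finset.sum_congr rfl fun z hz => ?_)
    rw [Function.update_of_ne (ne_of_mem_of_not_mem hz hy)]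
  omega

/-- The invariant of the saturation of an unprovable sequent relative to `H`. The history grows to
`hist`, and adding a witness for a formula in `K y` above `y` would make the sequent provable by
a jump. -/
structure SaturationInvariant (F : Finset Formula) (H : List HistoryEntry) (Δ : Set LFormula)
    (hist : List HistoryEntry) (K : ℕ → Finset Formula) (T : Forest) : Prop where
  wellFormed : T.WellFormed F
  suffix : H <:+ hist
  not_provable : ¬ Provable hist (T.sequent Δ)
  labels : ∀ a ∈ Δ, a.1 ∈ T.nodes
  blocked_subset : ∀ y ∈ T.nodes, K y ⊆ F
  blocked : ∀ y ∈ T.nodes, ∀ C ∈ K y, ∀ T', T'.WellFormed F → T ≤ T' →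
    ∀ z, (y, z) ∈ T'.rel → (z, C) ∈ T'.formulas → Provable hist (T'.sequent Δ)

/-- A companion for the extension of `T` by a witness `y`, at which the new label is tracked. -/
abbrev witnessEntry (T : Forest) (Δ : Set LFormula) (hist : List HistoryEntry) (x y : ℕ)
    (B : Formula) : HistoryEntry :=
  ⟨(T.addWitness x y B).sequent Δ, tracked hist ++ [y]⟩

/-- A second witness `z` above `y` allows a jump that moves `y` to `z`. -/
theorem provable_of_second_witness (hT : T.WellFormed F) (hΔ : ∀ a ∈ Δ, a.1 ∈ T.nodes)
    (hy : y ∉ T.nodes) {hist : List HistoryEntry} (hy' : y ∉ tracked hist)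
    (hT' : T'.WellFormed F) (hle : T.addWitness x y B ≤ T') {z : ℕ} (hyz : (y, z) ∈ T'.rel)
    (hz : (z, B) ∈ T'.formulas) :
    Provable (witnessEntry T Δ hist x y B :: hist) (T'.sequent Δ) := by
  have fix {a} (ha : a ∈ T.nodes) : Function.update id y z a = a :=
    Function.update_of_ne (ne_of_mem_of_not_mem ha hy) _ _
  have hlen : (tracked hist).length < (tracked hist ++ [y]).length := by simp
  refine ⟨0, .jump _ (Function.update id y z) (tracked hist).length hlen List.suffix_rfl
    ⟨?_, ?_, ?_⟩ (fun a ha => ?_) (by simpa using hyz)⟩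
  · rintro a b (hab | ⟨rfl, hax⟩)
    · rw [fix (hT.mem_nodes hab).1, fix (hT.mem_nodes hab).2]
      exact hle.2.1 (.inl hab)
    · have hay : (a, b) ∈ T'.rel := hle.2.1 (.inr ⟨rfl, hax⟩)
      rw [Function.update_of_ne (hT'.lt hay).ne, Function.update_self]
      exact hT'.trans hay hyz
  · rintro a A (heq | ha)
    · obtain ⟨rfl, rfl⟩ := Prod.mk.inj heq
      rwa [Function.update_self]
    · rw [fix (hT.formulas ha).1]
      exact hle.2.2 (.inr ha)
  · intro a A ha
    rwa [fix (hΔ _ ha)]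
  · rw [List.take_left' rfl] at ha
    exact Function.update_of_ne (ne_of_mem_of_not_mem ha hy') _ _

namespace SaturationInvariant

variable {hist : List HistoryEntry}

theorem addFormula (h : SaturationInvariant F H Δ hist K T) (hx : x ∈ T.nodes) (hA : A ∈ F)
    (hn : ¬ Provable hist ((T.addFormula x A).sequent Δ)) :
    SaturationInvariant F H Δ hist K (T.addFormula x A) where
  wellFormed := h.wellFormed.addFormula hx hA
  suffix := h.suffix
  not_provable := hn
  labels := h.labels
  blocked_subset := h.blocked_subset
  blocked := fun y hy C hC T' hT' hle => h.blocked y hy C hC T' hT' (Forest.le_addFormula.trans hle)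

theorem not_provable_addWitness (h : SaturationInvariant F H Δ hist K T)
    (hx : (x, B.dia) ∈ T.formulas) (hy : ∀ v ∈ T.nodes, v < y) (hy' : y ∉ tracked hist) :
    ¬ Provable hist ((T.addWitness x y B).sequent Δ) := fun hp =>
  h.not_provable <| .diaL hx
    (h.wellFormed.notMem_labels h.labels fun hmem => (hy y hmem).false) hy' hp

theorem notMem_blocked (hF : SubformulaClosed F) (h : SaturationInvariant F H Δ hist K T)
    (hx : (x, B.dia) ∈ T.formulas) (hy : ∀ v ∈ T.nodes, v < y) (hy' : y ∉ tracked hist) :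
    B ∉ K x := fun hB =>
  have ⟨hxT, hBF⟩ := h.wellFormed.formulas hx
  h.not_provable_addWitness hx hy hy' <| h.blocked x hxT B hB _
    (h.wellFormed.addWitness hxT hy (hF.dia hBF)) Forest.le_addWitness y Forest.mem_rel_addNode
    (Set.mem_insert _ _)

open Classical in
theorem addWitness (hF : SubformulaClosed F) (h : SaturationInvariant F H Δ hist K T)
    (hx : (x, B.dia) ∈ T.formulas) (hy : ∀ v ∈ T.nodes, v < y) (hy' : y ∉ tracked hist) :
    SaturationInvariant F H Δ (witnessEntry T Δ hist x y B :: hist)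
      (Function.update K y (insert B (K x))) (T.addWitness x y B) := by
  obtain ⟨hxT, hBF⟩ := h.wellFormed.formulas hx
  have hyT : y ∉ T.nodes := fun hmem => (hy y hmem).false
  have cases_node {v} (hv : v ∈ (T.addWitness x y B).nodes) : v = y ∨ v ∈ T.nodes ∧ v ≠ y :=
    (Finset.mem_insert.1 hv).imp_right fun hvT => ⟨hvT, ne_of_mem_of_not_mem hvT hyT⟩
  refine ⟨h.wellFormed.addWitness hxT hy (hF.dia hBF), h.suffix.trans (List.suffix_cons _ _),
    fun hp => h.not_provable_addWitness hx hy hy' (hp.push (List.prefix_append _ _)),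
    fun a ha => Finset.mem_insert_of_mem (h.labels a ha), fun v hv => ?_,
    fun v hv C hC T' hT' hle z hz hzC => ?_⟩
  · rcases cases_node hv with rfl | ⟨hvT, hne⟩
    · rw [Function.update_self]
      exact Finset.insert_subset (hF.dia hBF) (h.blocked_subset x hxT)
    · rw [Function.update_of_ne hne]
      exact h.blocked_subset v hvT
  · have blocked {u} (hu : u ∈ T.nodes) (hC : C ∈ K u) (huz : (u, z) ∈ T'.rel) :
        Provable (witnessEntry T Δ hist x y B :: hist) (T'.sequent Δ) :=
      (h.blocked u hu C hC T' hT' (Forest.le_addWitness.trans hle) z huz hzC).mono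
        (List.suffix_cons _ _) subset_rfl subset_rfl subset_rfl
    rcases cases_node hv with rfl | ⟨hvT, hne⟩
    · rw [Function.update_self] at hC
      rcases Finset.mem_insert.1 hC with rfl | hC
      · exact provable_of_second_witness h.wellFormed h.labels hyT hy' hT' hle hz hzC
      · exact blocked hxT hC (hT'.trans (hle.2.1 Forest.mem_rel_addNode) hz)
    · rw [Function.update_of_ne hne] at hC
      exact blocked hvT hC hz

theorem exists_step_of_closed (h : SaturationInvariant F H Δ hist K T) (hx : x ∈ T.nodes)
    (hA : A ∈ F) (hxA : (x, A) ∉ T.formulas) (hp : Provable H (T.sequent {(x, A)})) :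
    ∃ T' hist' K', Step F H T T' ∧ SaturationInvariant F H Δ hist' K' T' ∧
      forestMeasure F K' T' < forestMeasure F K T :=
  have hn : ¬ Provable hist ((T.addFormula x A).sequent Δ) := fun hp' => h.not_provable <|
    (hp.mono h.suffix subset_rfl subset_rfl subset_rfl).cut hp'
  ⟨_, hist, K, .add hx hA hxA hp, h.addFormula hx hA hn, forestMeasure_addFormula_lt hx hA hxA⟩

theorem exists_step_of_prime (hF : SubformulaClosed F) (h : SaturationInvariant F H Δ hist K T)
    (hor : (x, A.or B) ∈ T.formulas) (hxA : (x, A) ∉ T.formulas) (hxB : (x, B) ∉ T.formulas) :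
    ∃ T' hist' K', Step F H T T' ∧ SaturationInvariant F H Δ hist' K' T' ∧
      forestMeasure F K' T' < forestMeasure F K T := by
  obtain ⟨hx, hAB⟩ := h.wellFormed.formulas hor
  obtain ⟨hA, hB⟩ := hF.or hAB
  by_cases hp : Provable hist ((T.addFormula x A).sequent Δ)
  · have hn : ¬ Provable hist ((T.addFormula x B).sequent Δ) := fun hp' =>
      h.not_provable (.orL hor hp hp')
    exact ⟨_, hist, K, .or hor hxA hxB (.inr rfl), h.addFormula hx hB hn,
      forestMeasure_addFormula_lt hx hB hxB⟩
  · exact ⟨_, hist, K, .or hor hxA hxB (.inl rfl), h.addFormula hx hA hp,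
      forestMeasure_addFormula_lt hx hA hxA⟩

theorem exists_step_of_witness (hF : SubformulaClosed F) (h : SaturationInvariant F H Δ hist K T)
    (hx : (x, B.dia) ∈ T.formulas) (hxB : ∀ z, (x, z) ∈ T.rel → (z, B) ∉ T.formulas) :
    ∃ T' hist' K', Step F H T T' ∧ SaturationInvariant F H Δ hist' K' T' ∧
      forestMeasure F K' T' < forestMeasure F K T := by
  classical
  obtain ⟨y, hy', hy⟩ := T.exists_fresh (tracked hist)
  obtain ⟨hxT, hBF⟩ := h.wellFormed.formulas hx
  exact ⟨_, _, _, .dia hx hxB hy, h.addWitness hF hx hy hy',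
    forestMeasure_addWitness_lt hxT (hF.dia hBF) hxB (fun hmem => (hy y hmem).false)
      (h.blocked_subset x hxT) (h.notMem_blocked hF hx hy hy')⟩

theorem exists_step_of_not_saturated (hF : SubformulaClosed F)
    (h : SaturationInvariant F H Δ hist K T) (hT : ¬ Saturated F H T) :
    ∃ T' hist' K', Step F H T T' ∧ SaturationInvariant F H Δ hist' K' T' ∧
      forestMeasure F K' T' < forestMeasure F K T := by
  by_contra hstep
  refine hT ⟨fun x A hx hA hp => ?_, fun x A B hor => ?_, fun x B hdia => ?_⟩
  · by_contra hxA
    exact hstep (h.exists_step_of_closed hx hA hxA hp)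
  · by_contra hnot
    exact hstep (h.exists_step_of_prime hF hor (hnot <| .inl ·) (hnot <| .inr ·))
  · by_contra hnot
    exact hstep (h.exists_step_of_witness hF hdia fun z hz hzB => hnot ⟨z, hz, hzB⟩)

theorem exists_saturated (hF : SubformulaClosed F) (h : SaturationInvariant F H Δ hist K T) :
    ∃ T' hist' K', Relation.ReflTransGen (Step F H) T T' ∧ Saturated F H T' ∧
      SaturationInvariant F H Δ hist' K' T' := by
  induction hm : forestMeasure F K T using Nat.strong_induction_on generalizing T hist K with
  | _ m ih =>
    subst hm
    by_cases hT : Saturated F H T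
    · exact ⟨T, hist, K, .refl, hT, h⟩
    · obtain ⟨T', hist', K', hstep, h', hlt⟩ := h.exists_step_of_not_saturated hF hT
      obtain ⟨T₁, hist₁, K₁, hsteps, hT₁, h₁⟩ := ih _ hlt h' rfl
      exact ⟨T₁, hist₁, K₁, .head hstep hsteps, hT₁, h₁⟩

end SaturationInvariant

theorem exists_saturated (hF : SubformulaClosed F) (hT : T.WellFormed F)
    (hn : ¬ Provable H (T.sequent Δ)) (hΔ : ∀ a ∈ Δ, a.1 ∈ T.nodes) :
    ∃ T', Relation.ReflTransGen (Step F H) T T' ∧ T'.WellFormed F ∧ Saturated F H T' ∧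
      ¬ Provable H (T'.sequent Δ) := by
  have start : SaturationInvariant F H Δ H (fun _ => ∅) T :=
    ⟨hT, List.suffix_rfl, hn, hΔ, fun _ _ => Finset.empty_subset F,
      fun _ _ _ hC => absurd hC (Finset.notMem_empty _)⟩
  obtain ⟨T', hist, K, hsteps, hsat, h⟩ := start.exists_saturated hF
  exact ⟨T', hsteps, h.wellFormed, hsat, fun hp =>
    h.not_provable (hp.mono h.suffix subset_rfl subset_rfl subset_rfl)⟩

end Saturation

/-! ### Kruskal's theorem for coloured forests -/

section Kruskal

open Set.PartiallyWellOrderedOn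

/-- Nash-Williams: replacing a tail of `f` by a bad sequence in `S` would contradict minimality. -/
theorem partiallyWellOrderedOn_of_isMinBadSeq {α : Type*} {r : α → α → Prop} {rk : α → ℕ}
    {s S : Set α} {f : ℕ → α} (hf : IsBadSeq r s f) (hmin : ∀ n, IsMinBadSeq r rk s n f)
    (hSs : S ⊆ s) (hS : ∀ p ∈ S, ∃ n, rk p < rk (f n) ∧ ∀ q, r q p → r q (f n)) :
    S.PartiallyWellOrderedOn r := by
  rw [iff_forall_not_isBadSeq]
  intro g hg
  choose n hrk hr using fun k => hS (g k) (hg.1 k)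
  obtain ⟨k₀, hk₀⟩ : ∃ k₀, ∀ k, n k₀ ≤ n k :=
    ⟨Function.argmin n, fun k => Function.argmin_le n k⟩
  refine hmin (n k₀) (fun i => if i < n k₀ then f i else g (k₀ + (i - n k₀)))
    (fun m hm => (if_pos hm).symm) ?_ ⟨fun i => ?_, fun i j hij => ?_⟩
  · simpa using hrk k₀
  · dsimp only
    split_ifs
    · exact hf.1 i
    · exact hSs (hg.1 _)
  · dsimp only
    split_ifs with hi hj hj
    · exact hf.2 i j hij
    · exact fun h => hf.2 i _ (hi.trans_le (hk₀ _)) (hr _ _ h)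
    · omega
    · exact hg.2 _ _ (by omega)

theorem exists_rel_of_sublistForall₂ {α β : Type*} {r : α → β → Prop} {l : List α} {l' : List β}
    (h : List.SublistForall₂ r l l') {a : α} (ha : a ∈ l) : ∃ b ∈ l', r a b := by
  induction h with
  | nil => exact absurd ha List.not_mem_nil
  | cons hr _ ih =>
    rcases List.mem_cons.1 ha with rfl | ha
    · exact ⟨_, List.mem_cons_self, hr⟩
    · exact (ih ha).imp fun b hb => hb.imp_left (List.mem_cons_of_mem _)
  | cons_right _ ih => exact (ih ha).imp fun b hb => hb.imp_left (List.mem_cons_of_mem _)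

/-- The upward closure of `x` under a transitive relation `R`. -/
def cone (R : Set (ℕ × ℕ)) (x : ℕ) : Set ℕ := {a | a = x ∨ (x, a) ∈ R}

theorem self_mem_cone {R : Set (ℕ × ℕ)} {x : ℕ} : x ∈ cone R x := .inl rfl

/-- The child of `x` below or equal to `a`; it is `0` unless `a` lies strictly above `x`. -/
noncomputable def childToward (R : Set (ℕ × ℕ)) (x a : ℕ) : ℕ :=
  sInf {c | (x, c) ∈ R ∧ a ∈ cone R c}

section IsForest

variable {V : Finset ℕ} {R : Set (ℕ × ℕ)} {x y a b : ℕ}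

theorem childToward_spec (ha : (x, a) ∈ R) :
    (x, childToward R x a) ∈ R ∧ a ∈ cone R (childToward R x a) :=
  Nat.sInf_mem (s := {c | (x, c) ∈ R ∧ a ∈ cone R c}) ⟨a, ha, self_mem_cone⟩

theorem childToward_le (hy : (x, y) ∈ R) (ha : a ∈ cone R y) : childToward R x a ≤ y :=
  Nat.sInf_le (s := {c | (x, c) ∈ R ∧ a ∈ cone R c}) ⟨hy, ha⟩

namespace IsForest

theorem rel_of_rel_of_mem_cone (hR : IsForest V R) (hxy : (x, y) ∈ R) (ha : a ∈ cone R y) :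
    (x, a) ∈ R := by
  rcases ha with rfl | ha
  exacts [hxy, hR.trans hxy ha]

theorem rel_of_mem_cone_of_rel (hR : IsForest V R) (ha : a ∈ cone R x) (hab : (a, b) ∈ R) :
    (x, b) ∈ R := by
  rcases ha with rfl | ha
  exacts [hab, hR.trans ha hab]

theorem le_of_mem_cone (hR : IsForest V R) (ha : a ∈ cone R x) : x ≤ a := by
  rcases ha with rfl | ha
  exacts [le_rfl, (hR.lt ha).le]

theorem childToward_eq_of_rel (hR : IsForest V R) (ha : (x, a) ∈ R) (hab : (a, b) ∈ R) :
    childToward R x a = childToward R x b := by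
  obtain ⟨hca, hac⟩ := childToward_spec ha
  obtain ⟨hcb, hbc⟩ := childToward_spec (hR.trans ha hab)
  have hle : childToward R x b ≤ childToward R x a :=
    childToward_le hca (.inr (hR.rel_of_mem_cone_of_rel hac hab))
  have hle_a : childToward R x b ≤ a := hle.trans (hR.le_of_mem_cone hac)
  refine le_antisymm (childToward_le hcb ?_) hle
  rcases hbc with heq | hbc
  · exact absurd (hR.lt hab) (heq.trans_le hle_a).not_gt
  · rcases hR.comparable hab hbc with heq | hlt | hgt
    · exact .inl heq
    · exact absurd (hR.lt hlt) hle_a.not_gt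
    · exact .inr hgt

end IsForest

end IsForest

/-- A coloured forest with a distinguished node. -/
structure PointedForest (C : Type*) where
  nodes : Finset ℕ
  rel : Set (ℕ × ℕ)
  isForest : IsForest nodes rel
  color : ℕ → C
  root : ℕ

namespace PointedForest

variable {C : Type*} {p q : PointedForest C} {y : ℕ}

/-- The same forest with distinguished node `y`. -/
abbrev rootAt (p : PointedForest C) (y : ℕ) : PointedForest C := { p with root := y }

/-- `f` maps the cone above the root of `p` to the one above the root of `q`, preserving colours and
the relation. It need not be injective. -/
structure IsEmbedding (f : ℕ → ℕ) (p q : PointedForest C) : Prop where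
  rel : ∀ ⦃a b⦄, a ∈ cone p.rel p.root → (a, b) ∈ p.rel → (f a, f b) ∈ q.rel
  mem_cone : ∀ ⦃a⦄, a ∈ cone p.rel p.root → f a ∈ cone q.rel q.root
  color : ∀ ⦃a⦄, a ∈ cone p.rel p.root → q.color (f a) = p.color a

/-- The quasi-order on pointed coloured forests given by embeddings. -/
def Embeds (p q : PointedForest C) : Prop := ∃ f, IsEmbedding f p q

instance : IsPreorder (PointedForest C) Embeds where
  refl _ := ⟨id, fun _ _ _ h => h, fun _ h => h, fun _ _ => rfl⟩
  trans _ _ _ := fun ⟨f, hf⟩ ⟨g, hg⟩ =>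
    ⟨g ∘ f, fun _ _ ha hab => hg.rel (hf.mem_cone ha) (hf.rel ha hab),
      fun _ ha => hg.mem_cone (hf.mem_cone ha),
      fun _ ha => (hg.color (hf.mem_cone ha)).trans (hf.color ha)⟩

theorem Embeds.of_rootAt (hy : (q.root, y) ∈ q.rel) (h : Embeds p (q.rootAt y)) : Embeds p q :=
  let ⟨f, hf⟩ := h
  ⟨f, hf.rel, fun _ ha => .inr (q.isForest.rel_of_rel_of_mem_cone hy (hf.mem_cone ha)), hf.color⟩

open Classical in
theorem embeds_of_forall_exists (hcolor : q.color q.root = p.color p.root)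
    (h : ∀ y, (p.root, y) ∈ p.rel →
      ∃ y', (q.root, y') ∈ q.rel ∧ Embeds (p.rootAt y) (q.rootAt y')) : Embeds p q := by
  choose! y' hy' f hf using h
  set child := childToward p.rel p.root with hchild
  have maps {a} (ha : (p.root, a) ∈ p.rel) : (q.root, f (child a) a) ∈ q.rel :=
    have ⟨hc, hac⟩ := childToward_spec ha
    q.isForest.rel_of_rel_of_mem_cone (hy' _ hc) ((hf _ hc).mem_cone hac)
  have ne_root {a} (ha : (p.root, a) ∈ p.rel) : a ≠ p.root := (p.isForest.lt ha).ne'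
  refine ⟨fun a => if a = p.root then q.root else f (child a) a, fun a b ha hab => ?_,
    fun a ha => ?_, fun a ha => ?_⟩
  · have hb : (p.root, b) ∈ p.rel := p.isForest.rel_of_mem_cone_of_rel ha hab
    simp only [if_neg (ne_root hb)]
    rcases ha with rfl | ha
    · simpa only [if_pos] using maps hb
    · obtain ⟨hc, hac⟩ := childToward_spec ha
      simp only [if_neg (ne_root ha), hchild, ← p.isForest.childToward_eq_of_rel ha hab]
      exact (hf _ hc).rel hac hab
  · rcases ha with rfl | ha
    · simpa only [if_pos] using self_mem_cone
    · simpa only [if_neg (ne_root ha)] using .inr (maps ha)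
  · rcases ha with rfl | ha
    · simpa only [if_pos] using hcolor
    · obtain ⟨hc, hac⟩ := childToward_spec ha
      simpa only [if_neg (ne_root ha)] using (hf _ hc).color hac

open Classical in
/-- The nodes strictly above the root. -/
noncomputable def above (p : PointedForest C) : Finset ℕ :=
  p.nodes.filter fun a => (p.root, a) ∈ p.rel

theorem mem_above : y ∈ p.above ↔ (p.root, y) ∈ p.rel := by
  classical
  exact Finset.mem_filter.trans (and_iff_right_of_imp fun h => (p.isForest.mem_nodes h).2)

theorem card_above_rootAt_lt (hy : (p.root, y) ∈ p.rel) :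
    (p.rootAt y).above.card < p.above.card :=
  Finset.card_lt_card <| Finset.ssubset_iff_of_subset
    (fun _ ha => mem_above.2 (p.isForest.trans hy (mem_above.1 ha))) |>.2
    ⟨y, mem_above.2 hy, fun h => (p.isForest.lt ((mem_above (p := p.rootAt y)).1 h)).false⟩

theorem wellQuasiOrdered_embeds [Finite C] : WellQuasiOrdered (Embeds (C := C)) := by
  rw [← Set.partiallyWellOrderedOn_univ_iff, iff_not_exists_isMinBadSeq fun p => p.above.card]
  rintro ⟨f, hf, hmin⟩
  have hsub : {p | ∃ n y, ((f n).root, y) ∈ (f n).rel ∧ p = (f n).rootAt y}.PartiallyWellOrderedOn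
      Embeds := by
    refine partiallyWellOrderedOn_of_isMinBadSeq hf hmin (Set.subset_univ _) ?_
    rintro _ ⟨n, y, hy, rfl⟩
    exact ⟨n, card_above_rootAt_lt hy, fun q => Embeds.of_rootAt hy⟩
  obtain ⟨c, hc⟩ := Finite.exists_infinite_fiber fun n => (f n).color (f n).root
  obtain ⟨φ, hφ, hφc⟩ := Filter.extraction_of_frequently_atTop
    (Nat.frequently_atTop_iff_infinite.2 (Set.infinite_coe_iff.1 hc))
  obtain ⟨i, j, hij, hlist⟩ := (partiallyWellOrderedOn_sublistForall₂ Embeds hsub).exists_lt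
    (f := fun k => (f (φ k)).above.toList.map (f (φ k)).rootAt) fun k p hp => by
      obtain ⟨y, hy, rfl⟩ := List.mem_map.1 hp
      exact ⟨φ k, y, mem_above.1 (Finset.mem_toList.1 hy), rfl⟩
  refine hf.2 _ _ (hφ hij) (embeds_of_forall_exists ((hφc j).trans (hφc i).symm) fun y hy => ?_)
  obtain ⟨_, hmem, hemb⟩ := exists_rel_of_sublistForall₂ hlist
    (List.mem_map_of_mem (Finset.mem_toList.2 (mem_above.2 hy)))
  obtain ⟨y', hy', rfl⟩ := List.mem_map.1 hmem
  exact ⟨y', mem_above.1 (Finset.mem_toList.1 hy'), hemb⟩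

end PointedForest

end Kruskal

/-! ### Homomorphisms between forests that move a cone -/

section ConeHom

variable {F : Finset Formula} {T T' : Forest} {x x' z z' a : ℕ} {E E' : Formula} {N : Finset ℕ}
  {f : ℕ → ℕ}

/-- `f` maps the cone of `x` in `T` to that of `x'` in `T'`, preserving the relation and the
formulas, fixing the labels in `N`, and mapping `z : E` to `z' : E'`. -/
structure IsConeHom (f : ℕ → ℕ) (N : Finset ℕ) (T : Forest) (x z : ℕ) (E : Formula) (T' : Forest)
    (x' z' : ℕ) (E' : Formula) : Prop where
  rel : ∀ ⦃a b⦄, a ∈ cone T.rel x → (a, b) ∈ T.rel → (f a, f b) ∈ T'.rel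
  mem_cone : ∀ ⦃a⦄, a ∈ cone T.rel x → f a ∈ cone T'.rel x'
  formulas : ∀ ⦃a A⦄, a ∈ cone T.rel x → (a, A) ∈ T.formulas → (f a, A) ∈ T'.formulas
  fixed : ∀ ⦃a⦄, a ∈ cone T.rel x → a ∈ N → f a = a
  target : f z = z' ∧ E = E'

/-- The colour of a node records its formulas, whether it is the target `z : E`, and its name if it
belongs to `N`. -/
def nodeColor (F : Finset Formula) (N : Finset ℕ) (T : Forest) (z : ℕ) (E : Formula) (a : ℕ) :
    Set F × Set F × Set N :=
  ({A | (a, A.1) ∈ T.formulas}, {A | a = z ∧ A.1 = E}, {d | d.1 = a})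

/-- Kruskal's theorem for forests coloured by `nodeColor`. -/
theorem exists_isConeHom {T : ℕ → Forest} (hT : ∀ k, (T k).WellFormed F) {x z : ℕ → ℕ}
    {E : ℕ → Formula} (hz : ∀ k, z k ∈ cone (T k).rel (x k)) (hE : ∀ k, E k ∈ F) (N : Finset ℕ) :
    ∃ i j, i < j ∧ ∃ f, IsConeHom f N (T i) (x i) (z i) (E i) (T j) (x j) (z j) (E j) := by
  obtain ⟨i, j, hij, f, hf⟩ := PointedForest.wellQuasiOrdered_embeds fun k =>
    ⟨(T k).nodes, (T k).rel, (hT k).toIsForest, nodeColor F N (T k) (z k) (E k), x k⟩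
  have color {a} (ha : a ∈ cone (T i).rel (x i)) := Prod.ext_iff.1 (hf.color ha)
  have color₂ {a} (ha : a ∈ cone (T i).rel (x i)) := Prod.ext_iff.1 (color ha).2
  refine ⟨i, j, hij, f, hf.rel, hf.mem_cone, fun a A ha haA => ?_, fun a ha haN => ?_, ?_⟩
  · exact (Set.ext_iff.1 (color ha).1 ⟨A, ((hT i).formulas haA).2⟩).2 haA
  · exact ((Set.ext_iff.1 (color₂ ha).2 ⟨a, haN⟩).2 rfl).symm
  · exact (Set.ext_iff.1 (color₂ (hz i)).1 ⟨E i, hE i⟩).2 ⟨rfl, rfl⟩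

open Classical in
/-- The map that is `f` on the cone of `x` and the identity elsewhere. -/
noncomputable def moveCone (R : Set (ℕ × ℕ)) (x : ℕ) (f : ℕ → ℕ) (a : ℕ) : ℕ :=
  if a ∈ cone R x then f a else a

theorem moveCone_of_mem {R : Set (ℕ × ℕ)} (ha : a ∈ cone R x) : moveCone R x f a = f a :=
  if_pos ha

theorem moveCone_of_notMem {R : Set (ℕ × ℕ)} (ha : a ∉ cone R x) : moveCone R x f a = a :=
  if_neg ha

theorem IsForest.rel_of_rel_mem_cone {V : Finset ℕ} {R : Set (ℕ × ℕ)} {b : ℕ} (hR : IsForest V R)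
    (hab : (a, b) ∈ R) (ha : a ∉ cone R x) (hb : b ∈ cone R x) : (a, x) ∈ R := by
  rcases hb with rfl | hb
  · exact hab
  · rcases hR.comparable hab hb with rfl | hax | hxa
    · exact absurd self_mem_cone ha
    · exact hax
    · exact absurd (.inr hxa) ha

theorem IsConeHom.isHom_moveCone (h : IsConeHom f N T x z E T' x' z' E') (hT : T.WellFormed F)
    (hT' : T'.WellFormed F) (hle : T ≤ T') (hx : ∀ a, (a, x) ∈ T.rel → (a, x') ∈ T'.rel)
    (hz : z ∈ cone T.rel x) :
    IsHom (moveCone T.rel x f) (T.sequent {(z, E)}) (T'.sequent {(z', E')}) where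
  rel := fun a b hab => by
    by_cases ha : a ∈ cone T.rel x
    · have hb : b ∈ cone T.rel x := .inr (hT.rel_of_mem_cone_of_rel ha hab)
      rw [moveCone_of_mem ha, moveCone_of_mem hb]
      exact h.rel ha hab
    · rw [moveCone_of_notMem ha]
      by_cases hb : b ∈ cone T.rel x
      · rw [moveCone_of_mem hb]
        exact hT'.rel_of_rel_of_mem_cone (hx a (hT.rel_of_rel_mem_cone hab ha hb)) (h.mem_cone hb)
      · rw [moveCone_of_notMem hb]
        exact hle.2.1 hab
  left := fun a A haA => by
    by_cases ha : a ∈ cone T.rel x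
    · rw [moveCone_of_mem ha]
      exact h.formulas ha haA
    · rw [moveCone_of_notMem ha]
      exact hle.2.2 haA
  right := fun a A haA => by
    obtain ⟨rfl, rfl⟩ := Prod.mk.inj haA
    rw [moveCone_of_mem hz, h.target.1, h.target.2]
    rfl

end ConeHom

/-! ### Locality of saturation -/

section Locality

/-- `T'` extends `T` without adding predecessors to nodes of `T`. -/
structure Forest.Extends (T T' : Forest) : Prop where
  le : T ≤ T'
  rel : ∀ ⦃a b⦄, (a, b) ∈ T'.rel → b ∈ T.nodes → (a, b) ∈ T.rel

/-- The cone of `x` in `T'` has no nodes or formulas beyond those in `T`. -/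
structure AgreeAbove (x : ℕ) (T T' : Forest) : Prop where
  cone_subset : cone T'.rel x ⊆ cone T.rel x
  formulas : ∀ ⦃a A⦄, a ∈ cone T.rel x → (a, A) ∈ T'.formulas → (a, A) ∈ T.formulas

variable {F : Finset Formula} {H H' : List HistoryEntry} {T T' T'' P : Forest} {x y : ℕ}

namespace Forest.Extends

theorem refl (T : Forest) : T.Extends T := ⟨le_rfl, fun _ _ h _ => h⟩

theorem trans (h : T.Extends T') (h' : T'.Extends T'') : T.Extends T'' :=
  ⟨h.le.trans h'.le, fun _ _ hab hb => h.rel (h'.rel hab (h.le.1 hb)) hb⟩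

theorem addFormula (T : Forest) (x : ℕ) (A : Formula) : T.Extends (T.addFormula x A) :=
  ⟨le_addFormula, fun _ _ h _ => h⟩

theorem addNode (hy : ∀ v ∈ T.nodes, v < y) : T.Extends (T.addNode x y) :=
  ⟨le_addNode, fun _ _ h hb => h.resolve_right fun ⟨heq, _⟩ => (hy _ hb).ne heq⟩

theorem of_step (h : Step F H T T') : T.Extends T' := by
  cases h with
  | add => exact .addFormula _ _ _
  | or => exact .addFormula _ _ _
  | dia _ _ hy => exact (addNode hy).trans (.addFormula _ _ _)

theorem of_steps (h : Relation.ReflTransGen (Step F H) T T') : T.Extends T' := by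
  induction h with
  | refl => exact .refl T
  | tail _ hstep ih => exact ih.trans (.of_step hstep)

theorem mem_cone (h : T.Extends T') {a : ℕ} (ha : a ∈ T.nodes) (hax : a ∈ cone T'.rel x) :
    a ∈ cone T.rel x :=
  hax.imp_right fun hxa => h.rel hxa ha

end Forest.Extends

theorem cone_mono {R R' : Set (ℕ × ℕ)} (h : R ⊆ R') : cone R x ⊆ cone R' x :=
  fun _ ha => ha.imp_right (h ·)

theorem Forest.WellFormed.mem_nodes_of_mem_cone (hT : T.WellFormed F) (hx : x ∈ T.nodes) {a : ℕ}
    (ha : a ∈ cone T.rel x) : a ∈ T.nodes := by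
  rcases ha with rfl | ha
  exacts [hx, (hT.mem_nodes ha).2]

theorem AgreeAbove.addFormula (h : AgreeAbove x T P) (hy : y ∉ cone T.rel x) (A : Formula) :
    AgreeAbove x T (P.addFormula y A) where
  cone_subset := h.cone_subset
  formulas := by
    rintro a C ha (heq | haC)
    · exact absurd ((Prod.mk.inj heq).1 ▸ ha) hy
    · exact h.formulas ha haC

theorem AgreeAbove.addWitness (h : AgreeAbove x T P) (hle : T ≤ P) (hT : T.WellFormed F)
    (hx : x ∈ T.nodes) (hy : y ∉ cone T.rel x) {v : ℕ} (hv : ∀ u ∈ P.nodes, u < v) (B : Formula) :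
    AgreeAbove x T (P.addWitness y v B) where
  cone_subset := by
    rintro a (rfl | hxa | ⟨-, rfl | hxy⟩)
    · exact self_mem_cone
    · exact h.cone_subset (.inr hxa)
    · exact absurd self_mem_cone hy
    · exact absurd (h.cone_subset (.inr hxy)) hy
  formulas := by
    rintro a C ha (heq | haC)
    · have hav : a < v := hv a (hle.1 (hT.mem_nodes_of_mem_cone hx ha))
      exact absurd (Prod.mk.inj heq).1 hav.ne
    · exact h.formulas ha haC

/-- An intermediate stage `Q` between `T` and `T'`, which still agrees with `T` above `x`, proves
a new formula `y : A` in the cone of `x`. -/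
structure IsNewConsequence (F : Finset Formula) (H' : List HistoryEntry) (T T' : Forest) (x : ℕ)
    (Q : Forest) (y : ℕ) (A : Formula) : Prop where
  agree : AgreeAbove x T Q
  ext : T.Extends Q
  wellFormed : Q.WellFormed F
  le : Q ≤ T'
  mem_cone : y ∈ cone T.rel x
  mem : A ∈ F
  notMem : (y, A) ∉ T.formulas
  provable : Provable H' (Q.sequent {(y, A)})

theorem agreeAbove_or_exists_isNewConsequence (hF : SubformulaClosed F) (hx : x ∈ T.nodes)
    (hsat : Saturated F H T) (hT : T.WellFormed F)
    (hsteps : Relation.ReflTransGen (Step F H') P T') (hagree : AgreeAbove x T P)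
    (hext : T.Extends P) (hP : P.WellFormed F) :
    AgreeAbove x T T' ∨ ∃ Q y A, IsNewConsequence F H' T T' x Q y A := by
  induction hsteps using Relation.ReflTransGen.head_induction_on with
  | refl => exact .inl hagree
  | @head P P' hstep hsteps ih =>
    have hle : P ≤ T' := (Forest.Extends.of_steps (.head hstep hsteps)).le
    replace ih (hagree' : AgreeAbove x T P') :=
      ih hagree' (hext.trans (.of_step hstep)) (hstep.wellFormed hF hP)
    cases hstep with
    | @add y A _ hA hyA hp =>
      by_cases hy : y ∈ cone T.rel x
      · exact .inr ⟨P, y, A, hagree, hext, hP, hle, hy, hA, fun h => hyA (hext.le.2.2 h), hp⟩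
      · exact ih (hagree.addFormula hy A)
    | @or y A B C hor hA hB _ =>
      refine ih (hagree.addFormula (fun hy => ?_) C)
      rcases hsat.prime (hagree.formulas hy hor) with hyA | hyB
      exacts [hA (hext.le.2.2 hyA), hB (hext.le.2.2 hyB)]
    | @dia y v B hdia hB hv =>
      refine ih (hagree.addWitness hext.le hT hx (fun hy => ?_) hv B)
      obtain ⟨a, hya, haB⟩ := hsat.witness (hagree.formulas hy hdia)
      exact hB a (hext.le.2.1 hya) (hext.le.2.2 haB)

end Locality

/-! ### Phases -/

section Phases

/-- Every predecessor of an entry of `D` first occurs before that entry. -/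
def AncestorsFirst (R : Set (ℕ × ℕ)) (D : List ℕ) : Prop :=
  ∀ ⦃a d⦄, d ∈ D → (a, d) ∈ R → D.idxOf a < D.idxOf d

namespace AncestorsFirst

variable {R R' : Set (ℕ × ℕ)} {D : List ℕ} {a d : ℕ}

theorem mem (h : AncestorsFirst R D) (hd : d ∈ D) (had : (a, d) ∈ R) : a ∈ D :=
  List.idxOf_lt_length_iff.1 ((h hd had).trans (List.idxOf_lt_length_of_mem hd))

theorem anti (h : AncestorsFirst R D) (hR : ∀ ⦃a d⦄, d ∈ D → (a, d) ∈ R' → (a, d) ∈ R) :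
    AncestorsFirst R' D :=
  fun _ _ hd had => h hd (hR hd had)

theorem notMem_cone_of_mem_take (h : AncestorsFirst R D) (hd : d ∈ D.take (D.idxOf a)) :
    d ∉ cone R a := by
  have hmem : d ∈ D := List.mem_of_mem_take hd
  have hlt : D.idxOf d < D.idxOf a := (List.mem_take_iff_idxOf_lt hmem).1 hd
  rintro (rfl | had)
  exacts [hlt.false, hlt.asymm (h hmem had)]

theorem concat (h : AncestorsFirst R D) (hd : ∀ a, (a, d) ∈ R → a ∈ D) :
    AncestorsFirst R (D ++ [d]) := by
  intro a b hb hab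
  by_cases hbD : b ∈ D
  · rw [List.idxOf_append_of_mem (h.mem hbD hab), List.idxOf_append_of_mem hbD]
    exact h hbD hab
  · obtain rfl : b = d := by simpa [hbD] using hb
    rw [List.idxOf_append_of_mem (hd a hab), List.idxOf_append_of_notMem hbD]
    exact (List.idxOf_lt_length_of_mem (hd a hab)).trans_le (Nat.le_add_right _ _)

theorem exists_extend (hR : ∀ ⦃a b⦄, (a, b) ∈ R → a < b) (h : AncestorsFirst R D)
    (A : Finset ℕ) (hA : ∀ ⦃a b⦄, (a, b) ∈ R → b ∈ A → a ∈ A) :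
    ∃ D', D <+: D' ∧ AncestorsFirst R D' ∧ ∀ d, d ∈ D' ↔ d ∈ D ∨ d ∈ A := by
  induction A using Finset.induction_on_max with
  | empty => exact ⟨D, List.prefix_rfl, h, by simp⟩
  | insert m A hm ih =>
    obtain ⟨D', hprefix, hD', hmem⟩ := ih fun a b hab hb =>
      Finset.mem_of_mem_insert_of_ne (hA hab (Finset.mem_insert_of_mem hb))
        ((hR hab).trans (hm b hb)).ne
    refine ⟨D' ++ [m], hprefix.trans (List.prefix_append _ _), hD'.concat fun a ha => ?_, ?_⟩
    · exact (hmem a).2 <| .inr <|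
        Finset.mem_of_mem_insert_of_ne (hA ha (Finset.mem_insert_self _ _)) (hR ha).ne
    · intro d
      simp only [List.mem_append, hmem, List.mem_singleton, Finset.mem_insert]
      tauto

end AncestorsFirst

/-- A stage of the countermodel construction: a forest and the history relative to which it is
saturated. -/
structure State where
  hist : List HistoryEntry
  forest : Forest

/-- The invariants of the states of the countermodel construction. -/
structure State.Valid (F : Finset Formula) (s : State) : Prop where
  wellFormed : s.forest.WellFormed F
  saturated : Saturated F s.hist s.forest
  bot_notMem : ∀ x, (x, Formula.bot) ∉ s.forest.formulas
  zero_mem : 0 ∈ s.forest.nodes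
  tracked_mem : ∀ d ∈ tracked s.hist, d ∈ s.forest.nodes
  ancestorsFirst : AncestorsFirst s.forest.rel (tracked s.hist)

/-- The data of a step from one state to the next: the forest `start` with which it begins, the
formula `label : formula` to be refuted, and the labels tracked from then on. -/
structure Phase where
  start : Forest
  label : ℕ
  formula : Formula
  track : List ℕ

/-- The sequent refuted in a phase. -/
abbrev Phase.goal (p : Phase) : SetSequent := p.start.sequent {(p.label, p.formula)}

/-- The phase `p` leads from `s` to `s'`: `start` extends `s` by formulas at `label` (possibly a new
node), `goal` joins the history, and `s'` is reached by saturation. -/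
structure Phase.Leads (F : Finset Formula) (p : Phase) (s s' : State) : Prop where
  ext : s.forest.Extends p.start
  wellFormed : p.start.WellFormed F
  formula_mem : p.formula ∈ F
  formulas : ∀ ⦃a A⦄, (a, A) ∈ p.start.formulas → (a, A) ∈ s.forest.formulas ∨ a = p.label
  nodes : ∀ ⦃a⦄, a ∈ p.start.nodes → a ∈ s.forest.nodes ∨ a = p.label
  not_provable : ¬ Provable s'.hist p.goal
  hist : s'.hist = ⟨p.goal, p.track⟩ :: s.hist
  ancestorsFirst : AncestorsFirst p.start.rel p.track
  track_mem_nodes : ∀ ⦃d⦄, d ∈ p.track → d ∈ p.start.nodes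
  mem_track : ∀ ⦃d⦄, d ∈ p.track ↔ d ∈ tracked s.hist ∨ p.label ∈ cone p.start.rel d
  steps : Relation.ReflTransGen (Step F s'.hist) p.start s'.forest

/-- The states `s'` reachable from `s` by one phase. -/
def State.Next (F : Finset Formula) (s s' : State) : Prop := ∃ p : Phase, p.Leads F s s'

variable {F : Finset Formula} {s s' : State} {P : Forest} {z : ℕ} {E : Formula}

theorem Phase.Leads.start_extends {p : Phase} (h : p.Leads F s s') : p.start.Extends s'.forest :=
  .of_steps h.steps

theorem State.Next.ext (h : s.Next F s') : s.forest.Extends s'.forest :=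
  let ⟨_, hp⟩ := h
  hp.ext.trans hp.start_extends

theorem State.Valid.exists_track (hs : s.Valid F) (hext : s.forest.Extends P)
    (hP : P.WellFormed F) (hz : z ∈ P.nodes) :
    ∃ D, tracked s.hist <+: D ∧ AncestorsFirst P.rel D ∧ (∀ d ∈ D, d ∈ P.nodes) ∧
      ∀ d, d ∈ D ↔ d ∈ tracked s.hist ∨ z ∈ cone P.rel d := by
  classical
  have mem_nodes {d} (hd : z ∈ cone P.rel d) : d ∈ P.nodes := by
    rcases hd with rfl | hd
    exacts [hz, (hP.mem_nodes hd).1]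
  have htracked : AncestorsFirst P.rel (tracked s.hist) :=
    hs.ancestorsFirst.anti fun _ _ hd had => hext.rel had (hs.tracked_mem _ hd)
  obtain ⟨D, hprefix, hD, hmem⟩ := htracked.exists_extend hP.lt
    (P.nodes.filter fun d => z ∈ cone P.rel d) fun a b hab hb =>
      have hab' := hP.rel_of_rel_of_mem_cone hab (Finset.mem_filter.1 hb).2
      Finset.mem_filter.2 ⟨(hP.mem_nodes hab).1, .inr hab'⟩
  simp only [Finset.mem_filter, and_iff_right_of_imp mem_nodes] at hmem
  refine ⟨D, hprefix, hD, fun d hd => ?_, hmem⟩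
  exact ((hmem d).1 hd).elim (fun h => hext.le.1 (hs.tracked_mem d h)) mem_nodes

theorem State.Valid.exists_next (hF : SubformulaClosed F) (hs : s.Valid F)
    (hext : s.forest.Extends P) (hP : P.WellFormed F) (hz : z ∈ P.nodes) (hE : E ∈ F)
    (hformulas : ∀ ⦃a A⦄, (a, A) ∈ P.formulas → (a, A) ∈ s.forest.formulas ∨ a = z)
    (hnodes : ∀ ⦃a⦄, a ∈ P.nodes → a ∈ s.forest.nodes ∨ a = z)
    (hn : ¬ Provable s.hist (P.sequent {(z, E)})) :
    ∃ s', s.Next F s' ∧ s'.Valid F ∧ P ≤ s'.forest ∧ (z, E) ∉ s'.forest.formulas := by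
  obtain ⟨D, hprefix, hD, hDP, hmem⟩ := hs.exists_track hext hP hz
  have hn' : ¬ Provable (⟨P.sequent {(z, E)}, D⟩ :: s.hist) (P.sequent {(z, E)}) :=
    fun h => hn (h.push hprefix)
  obtain ⟨T, hsteps, hT, hsat, hnT⟩ := exists_saturated hF hP hn' fun a ha => by
    rwa [Set.mem_singleton_iff.1 ha]
  have hPT : P.Extends T := .of_steps hsteps
  refine ⟨⟨_, T⟩, ⟨⟨P, z, E, D⟩, hext, hP, hE, hformulas, hnodes, hn', rfl, hD, hDP, hmem, hsteps⟩,
    ⟨hT, hsat, fun x hx => hnT (.of_isAxiom (.botL hx)), hPT.le.1 (hext.le.1 hs.zero_mem),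
      fun d hd => hPT.le.1 (hDP d hd),
      hD.anti fun _ _ hd had => hPT.rel had (hDP _ hd)⟩, hPT.le, fun h => ?_⟩
  exact hnT (.of_isAxiom (.id h rfl))

end Phases

/-! ### Infinite runs -/

section Runs

open Filter

theorem mem_cone_trans {F : Finset Formula} {T : Forest} (hT : T.WellFormed F) {x a b : ℕ}
    (ha : a ∈ cone T.rel x) (hb : b ∈ cone T.rel a) : b ∈ cone T.rel x := by
  rcases ha with rfl | ha
  exacts [hb, .inr (hT.rel_of_rel_of_mem_cone ha hb)]

theorem IsConeHom.of_agreeAbove {F : Finset Formula} {f : ℕ → ℕ} {N : Finset ℕ} {T Q T' : Forest}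
    {x z x' z' : ℕ} {E E' : Formula} (h : IsConeHom f N T x z E T' x' z' E')
    (hagree : AgreeAbove x T Q) (hext : T.Extends Q) (hT : T.WellFormed F) (hQ : Q.WellFormed F)
    (hx : x ∈ T.nodes) : IsConeHom f N Q x z E T' x' z' E' where
  rel := fun _ _ ha hab =>
    have hb := hagree.cone_subset (.inr (hQ.rel_of_mem_cone_of_rel ha hab))
    h.rel (hagree.cone_subset ha) (hext.rel hab (hT.mem_nodes_of_mem_cone hx hb))
  mem_cone := fun _ ha => h.mem_cone (hagree.cone_subset ha)
  formulas := fun _ _ ha haA =>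
    have ha := hagree.cone_subset ha
    h.formulas ha (hagree.formulas ha haA)
  fixed := fun _ ha haN => h.fixed (hagree.cone_subset ha) haN
  target := h.target

/-- An infinite sequence of valid states, each leading to the next by a phase. -/
structure IsRun (F : Finset Formula) (u : ℕ → State) (p : ℕ → Phase) : Prop where
  valid : ∀ n, (u n).Valid F
  leads : ∀ n, (p n).Leads F (u n) (u (n + 1))

namespace IsRun

variable {F : Finset Formula} {u : ℕ → State} {p : ℕ → Phase} {m n N x : ℕ} {g : ℕ → ℕ}

theorem extends_of_le (hu : IsRun F u p) (hmn : m ≤ n) : (u m).forest.Extends (u n).forest := by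
  induction n, hmn using Nat.le_induction with
  | base => exact .refl _
  | succ n _ ih => exact ih.trans (State.Next.ext ⟨_, hu.leads n⟩)

theorem hist_suffix (hu : IsRun F u p) (hmn : m ≤ n) : (u m).hist <:+ (u n).hist := by
  induction n, hmn using Nat.le_induction with
  | base => exact List.suffix_rfl
  | succ n _ ih => exact (hu.leads n).hist ▸ ih.trans (List.suffix_cons _ _)

theorem start_le_start (hu : IsRun F u p) (hmn : m < n) : (p m).start ≤ (p n).start :=
  (hu.leads m).start_extends.le.trans ((hu.extends_of_le hmn).le.trans (hu.leads n).ext.le)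

theorem agreeAbove_start (hu : IsRun F u p) (hn : (p n).label ∉ cone (p n).start.rel x) :
    AgreeAbove x (u n).forest (p n).start where
  cone_subset := by
    rintro a (rfl | ha)
    · exact self_mem_cone
    rcases (hu.leads n).nodes ((hu.leads n).wellFormed.mem_nodes ha).2 with hau | rfl
    · exact .inr ((hu.leads n).ext.rel ha hau)
    · exact absurd (.inr ha) hn
  formulas := by
    intro a A ha haA
    rcases (hu.leads n).formulas haA with haA | rfl
    · exact haA
    · exact absurd (cone_mono (hu.leads n).ext.le.2.1 ha) hn

theorem mem_tracked_of_mem_cone (hu : IsRun F u p)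
    (hx : ∀ n ≥ N, (p n).label ∉ cone (p n).start.rel x) (hn : N ≤ n) {d : ℕ}
    (hd : d ∈ tracked (u n).hist) (hdx : d ∈ cone (u n).forest.rel x) :
    d ∈ tracked (u N).hist := by
  induction n, hn using Nat.le_induction with
  | base => exact hd
  | succ n hn ih =>
    have hstep := hu.leads n
    rw [hstep.hist] at hd
    rcases hstep.mem_track.1 hd with hd' | hlabel
    · exact ih hd' ((hu.extends_of_le n.le_succ).mem_cone ((hu.valid n).tracked_mem d hd') hdx)
    · have hdx' := hstep.start_extends.mem_cone (hstep.track_mem_nodes hd) hdx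
      exact absurd (mem_cone_trans hstep.wellFormed hdx' hlabel) (hx n hn)

/-- A new consequence in the cone of `x` at stage `m` would, after renaming by a homomorphism into
the cone at a later stage `n`, be provable there, although the forest at stage `n` is saturated. -/
theorem not_isConeHom (hu : IsRun F u p)
    (hx : ∀ n ≥ N, (p n).label ∉ cone (p n).start.rel x) (hxN : x ∈ (u N).forest.nodes)
    (hm : N ≤ m) (hmn : m < n) {Q Q' : Forest} {y y' : ℕ} {A A' : Formula}
    (hA : IsNewConsequence F (u (m + 1)).hist (u m).forest (u (m + 1)).forest x Q y A)
    (hA' : IsNewConsequence F (u (n + 1)).hist (u n).forest (u (n + 1)).forest x Q' y' A')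
    {f : ℕ → ℕ} : ¬ IsConeHom f (tracked (u N).hist).toFinset (u m).forest x y A
      (u n).forest x y' A' := by
  intro hf
  have hle : Q ≤ (u n).forest := hA.le.trans (hu.extends_of_le hmn).le
  have mem_nodes {k} (hk : N ≤ k) : x ∈ (u k).forest.nodes := (hu.extends_of_le hk).le.1 hxN
  have hfQ := hf.of_agreeAbove hA.agree hA.ext (hu.valid m).wellFormed hA.wellFormed (mem_nodes hm)
  have hom := hfQ.isHom_moveCone hA.wellFormed (hu.valid n).wellFormed hle
    (fun _ ha => hle.2.1 ha) (cone_mono hA.ext.le.2.1 hA.mem_cone)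
  have hfix : ∀ d ∈ tracked (u (m + 1)).hist, moveCone Q.rel x f d = d := by
    intro d hd
    by_cases hdx : d ∈ cone Q.rel x
    · rw [moveCone_of_mem hdx]
      exact hfQ.fixed hdx <| List.mem_toFinset.2 <|
        hu.mem_tracked_of_mem_cone hx (hm.trans m.le_succ) hd (cone_mono hA.le.2.1 hdx)
    · exact moveCone_of_notMem hdx
  have hy' : y' ∈ (u n).forest.nodes :=
    (hu.valid n).wellFormed.mem_nodes_of_mem_cone (mem_nodes (hm.trans hmn.le)) hA'.mem_cone
  exact hA'.notMem <| (hu.valid n).saturated.closed hy' hA'.mem <|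
    hA.provable.rename (hu.hist_suffix hmn) hom hfix

theorem eventually_agreeAbove (hF : SubformulaClosed F) (hu : IsRun F u p)
    (hx : ∀ n ≥ N, (p n).label ∉ cone (p n).start.rel x) (hxN : x ∈ (u N).forest.nodes) :
    ∀ᶠ n in atTop, AgreeAbove x (u n).forest (u (n + 1)).forest := by
  by_contra hfreq
  obtain ⟨φ, hφ, hφN⟩ := extraction_of_frequently_atTop
    ((not_eventually.1 hfreq).and_eventually (eventually_ge_atTop N))
  have mem_nodes (k) : x ∈ (u (φ k)).forest.nodes := (hu.extends_of_le (hφN k).2).le.1 hxN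
  have hnew (k) := (agreeAbove_or_exists_isNewConsequence hF (mem_nodes k)
    (hu.valid (φ k)).saturated (hu.valid (φ k)).wellFormed (hu.leads (φ k)).steps
    (hu.agreeAbove_start (hx _ (hφN k).2)) (hu.leads (φ k)).ext
    (hu.leads (φ k)).wellFormed).resolve_left (hφN k).1
  choose Q y A hQ using hnew
  obtain ⟨i, j, hij, f, hf⟩ := exists_isConeHom (fun k => (hu.valid (φ k)).wellFormed)
    (fun k => (hQ k).mem_cone) (fun k => (hQ k).mem) (tracked (u N).hist).toFinset
  exact hu.not_isConeHom hx hxN (hφN i).2 (hφ hij) (hQ i) (hQ j) hf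

theorem eventually_rel (hu : IsRun F u p) (hg : ∀ i, ∃ n, (g i, g (i + 1)) ∈ (u n).forest.rel)
    {i j : ℕ} (hij : i < j) : ∀ᶠ n in atTop, (g i, g j) ∈ (u n).forest.rel := by
  have succ (i) : ∀ᶠ n in atTop, (g i, g (i + 1)) ∈ (u n).forest.rel :=
    let ⟨m, hm⟩ := hg i
    (eventually_ge_atTop m).mono fun n hn => (hu.extends_of_le hn).le.2.1 hm
  induction j, hij using Nat.le_induction with
  | base => exact succ i
  | succ j _ ih =>
    filter_upwards [ih, succ j] with n hn hn'
    exact (hu.valid n).wellFormed.trans hn hn'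

theorem frequently_label_mem_cone (hF : SubformulaClosed F) (hu : IsRun F u p)
    (hg : ∀ i, ∃ n, (g i, g (i + 1)) ∈ (u n).forest.rel) (i : ℕ) :
    ∃ᶠ n in atTop, (p n).label ∈ cone (p n).start.rel (g i) := by
  intro hlabel
  obtain ⟨N, hN⟩ := eventually_atTop.1 (hlabel.and (hu.eventually_rel hg i.lt_succ_self))
  have hgi : g i ∈ (u N).forest.nodes := ((hu.valid N).wellFormed.mem_nodes (hN N le_rfl).2).1
  obtain ⟨M, hM⟩ := eventually_atTop.1
    ((hu.eventually_agreeAbove hF (fun n hn => (hN n hn).1) hgi).and (eventually_ge_atTop N))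
  have hcone {n} (hn : M ≤ n) : cone (u n).forest.rel (g i) ⊆ cone (u M).forest.rel (g i) := by
    induction n, hn using Nat.le_induction with
    | base => exact subset_rfl
    | succ n hn ih => exact (hM n hn).1.cone_subset.trans ih
  have mem_nodes : ∀ j ∈ Set.Ioi i, g j ∈ (u M).forest.nodes := fun j hj => by
    obtain ⟨n, hn, hMn⟩ := ((hu.eventually_rel hg hj).and (eventually_ge_atTop M)).exists
    exact (hu.valid M).wellFormed.mem_nodes_of_mem_cone
      ((hu.extends_of_le (hM M le_rfl).2).le.1 hgi) (hcone hMn (.inr hn))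
  have hmono : StrictMono g := strictMono_nat_of_lt_succ fun j =>
    let ⟨n, hn⟩ := hg j
    (hu.valid n).wellFormed.lt hn
  exact Set.infinite_of_injOn_mapsTo hmono.injective.injOn mem_nodes (Set.Ioi_infinite i)
    (u M).forest.nodes.finite_toSet

/-- If `goal` at stage `m` embeds into `goal` at stage `n` so that `x` moves along the relation,
then the latter is proved by jumping back to the former. -/
theorem not_isConeHom_start (hu : IsRun F u p) (hmn : m < n) {x' : ℕ}
    (hx : (p m).label ∈ cone (p m).start.rel x) (hxx' : (x, x') ∈ (p n).start.rel) {f : ℕ → ℕ} :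
    ¬ IsConeHom f ∅ (p m).start x (p m).label (p m).formula
      (p n).start x' (p n).label (p n).formula := by
  intro hf
  have hm := hu.leads m
  have hn := hu.leads n
  have hle := hu.start_le_start hmn
  have hom : IsHom (moveCone (p m).start.rel x f) (p m).goal (p n).goal :=
    hf.isHom_moveCone hm.wellFormed hn.wellFormed hle
      (fun a ha => hn.wellFormed.trans (hle.2.1 ha) hxx') hx
  have hp : (p m).track.idxOf x < (p m).track.length :=
    List.idxOf_lt_length_of_mem (hm.mem_track.2 (.inr hx))
  have hsuffix : ⟨(p m).goal, (p m).track⟩ :: (u m).hist <:+ (u (n + 1)).hist :=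
    hm.hist ▸ hu.hist_suffix (Nat.succ_le_succ hmn.le)
  refine hn.not_provable ⟨0, .jump _ _ _ hp hsuffix hom
    (fun d hd => moveCone_of_notMem (hm.ancestorsFirst.notMem_cone_of_mem_take hd)) ?_⟩
  rw [List.getElem_idxOf, moveCone_of_mem self_mem_cone]
  exact hn.wellFormed.rel_of_rel_of_mem_cone hxx' (hf.mem_cone self_mem_cone)

theorem not_forall_exists_rel (hF : SubformulaClosed F) (hu : IsRun F u p) (g : ℕ → ℕ) :
    ¬ ∀ i, ∃ n, (g i, g (i + 1)) ∈ (u n).forest.rel := by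
  intro hg
  have hfreq (i) : ∃ᶠ n in atTop, (p n).label ∈ cone (p n).start.rel (g i) ∧
      ∀ j ∈ Finset.range i, (g j, g i) ∈ (p n).start.rel :=
    (hu.frequently_label_mem_cone hF hg i).and_eventually <|
      (eventually_all_finset _).2 fun j hj =>
        (hu.eventually_rel hg (Finset.mem_range.1 hj)).mono fun n hn =>
          (hu.leads n).ext.le.2.1 hn
  obtain ⟨φ, hφ, hlabel⟩ := extraction_forall_of_frequently hfreq
  obtain ⟨i, j, hij, f, hf⟩ := exists_isConeHom (fun k => (hu.leads (φ k)).wellFormed)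
    (fun k => (hlabel k).1) (fun k => (hu.leads (φ k)).formula_mem) ∅
  exact hu.not_isConeHom_start (hφ hij) (hlabel i).1 ((hlabel j).2 i (Finset.mem_range.2 hij)) hf

end IsRun

end Runs

/-! ### The canonical Kripke structure -/

section TruthConditions

namespace State.Valid

variable {F : Finset Formula} {s : State} {x y : ℕ} {A B : Formula}

theorem mem_of_isAxiom (hs : s.Valid F) (hx : x ∈ s.forest.nodes) (hA : A ∈ F)
    (h : IsAxiom (s.forest.sequent {(x, A)})) : (x, A) ∈ s.forest.formulas :=
  hs.saturated.closed hx hA (.of_isAxiom h)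

theorem and_mem_iff (hF : SubformulaClosed F) (hs : s.Valid F) (hx : x ∈ s.forest.nodes)
    (hAB : A.and B ∈ F) : (x, A.and B) ∈ s.forest.formulas ↔
      (x, A) ∈ s.forest.formulas ∧ (x, B) ∈ s.forest.formulas :=
  ⟨fun h => ⟨hs.mem_of_isAxiom hx (hF.and hAB).1 (.andL₁ h rfl),
    hs.mem_of_isAxiom hx (hF.and hAB).2 (.andL₂ h rfl)⟩,
    fun h => hs.mem_of_isAxiom hx hAB (.andR h.1 h.2 rfl)⟩

theorem or_mem_iff (hs : s.Valid F) (hx : x ∈ s.forest.nodes) (hAB : A.or B ∈ F) :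
    (x, A.or B) ∈ s.forest.formulas ↔
      (x, A) ∈ s.forest.formulas ∨ (x, B) ∈ s.forest.formulas :=
  ⟨fun h => hs.saturated.prime h, fun h => hs.mem_of_isAxiom hx hAB <|
    h.elim (.orR₁ · rfl) (.orR₂ · rfl)⟩

theorem dia_mem_iff (hs : s.Valid F) (hx : x ∈ s.forest.nodes) (hA : A.dia ∈ F) :
    (x, A.dia) ∈ s.forest.formulas ↔ ∃ y, (x, y) ∈ s.forest.rel ∧ (y, A) ∈ s.forest.formulas :=
  ⟨fun h => hs.saturated.witness h,
    fun ⟨_, hxy, hyA⟩ => hs.mem_of_isAxiom hx hA (.diaR hxy hyA rfl)⟩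

theorem exists_next_of_imp_notMem (hF : SubformulaClosed F) (hs : s.Valid F)
    (hx : x ∈ s.forest.nodes) (hAB : A.imp B ∈ F) (h : (x, A.imp B) ∉ s.forest.formulas) :
    ∃ s', s.Next F s' ∧ s'.Valid F ∧
      (x, A) ∈ s'.forest.formulas ∧ (x, B) ∉ s'.forest.formulas := by
  obtain ⟨s', hnext, hs', hle, hB⟩ := hs.exists_next (P := s.forest.addFormula x A) hF
    (.addFormula _ _ _) (hs.wellFormed.addFormula hx (hF.imp hAB).1) hx (hF.imp hAB).2
    (fun a C haC => haC.symm.imp_right fun heq => (Prod.mk.inj heq).1) (fun _ => .inl)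
    (fun hp => h (hs.saturated.closed hx hAB (.impR hp)))
  exact ⟨s', hnext, hs', hle.2.2 (Set.mem_insert _ _), hB⟩

theorem exists_next_of_box_notMem (hF : SubformulaClosed F) (hs : s.Valid F)
    (hx : x ∈ s.forest.nodes) (hA : A.box ∈ F) (h : (x, A.box) ∉ s.forest.formulas) :
    ∃ s', s.Next F s' ∧ s'.Valid F ∧
      ∃ y, (x, y) ∈ s'.forest.rel ∧ (y, A) ∉ s'.forest.formulas := by
  obtain ⟨y, hyt, hy⟩ := s.forest.exists_fresh (tracked s.hist)
  have hlabels := hs.wellFormed.notMem_labels (Δ := {(x, A.box)})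
    (fun a ha => by rwa [Set.mem_singleton_iff.1 ha]) fun hmem => (hy y hmem).false
  obtain ⟨s', hnext, hs', hle, hyA⟩ := hs.exists_next (P := s.forest.addNode x y) hF
    (.addNode hy) (hs.wellFormed.addNode hx hy) (Finset.mem_insert_self _ _) (hF.box hA)
    (fun _ _ => .inl) (fun _ ha => (Finset.mem_insert.1 ha).symm)
    (fun hp => h (hs.saturated.closed hx hA (.boxR hlabels hyt hp)))
  exact ⟨s', hnext, hs', y, hle.2.1 Forest.mem_rel_addNode, hyA⟩

end State.Valid

end TruthConditions

section CanonicalModel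

variable {F : Finset Formula}

/-- A world of the canonical Kripke structure: the finite history of a run. The whole history
rather than its last state is recorded so that extension is a partial order in which every
infinite increasing sequence of worlds comes from a single run. -/
structure World (F : Finset Formula) : Type where
  states : List State
  ne_nil : states ≠ []
  isChain : states.IsChain (State.Next F)
  valid : ∀ s ∈ states, s.Valid F

namespace World

/-- The last state of a world. -/
def current (w : World F) : State := w.states.getLast w.ne_nil

variable {w w' : World F}

theorem current_valid (w : World F) : w.current.Valid F := w.valid _ (List.getLast_mem w.ne_nil)

instance : PartialOrder (World F) where
  le w w' := w.states <+: w'.states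
  le_refl _ := List.prefix_rfl
  le_trans _ _ _ h h' := h.trans h'
  le_antisymm w w' h h' := by
    cases w
    cases w'
    congr
    exact h.eq_of_length_le h'.length_le

theorem forest_mono (h : w ≤ w') : w.current.forest ≤ w'.current.forest := by
  obtain ⟨t, ht⟩ := h
  have hle : (w.states ++ t).Pairwise fun s s' => s.forest ≤ s'.forest :=
    ht ▸ (w'.isChain.imp fun _ _ h => (State.Next.ext h).le).pairwise
  have hlast : w'.current = (w.states ++ t).getLast (ht ▸ w'.ne_nil) := by
    simp only [current, ht]
  rw [hlast]
  by_cases htnil : t = []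
  · simp only [htnil, List.append_nil]
    exact le_rfl
  · rw [List.getLast_append_of_ne_nil _ htnil]
    exact (List.pairwise_append.1 hle).2.2 _ (List.getLast_mem w.ne_nil) _ (List.getLast_mem htnil)

theorem exists_le_of_next (w : World F) {s : State} (hs : w.current.Next F s) (hsv : s.Valid F) :
    ∃ w', w ≤ w' ∧ w'.current = s := by
  have isChain : (w.states ++ [s]).IsChain (State.Next F) :=
    List.isChain_append.2 ⟨w.isChain, List.isChain_singleton s, by
      simpa [List.getLast?_eq_getLast_of_ne_nil w.ne_nil, World.current] using hs⟩
  have valid : ∀ t ∈ w.states ++ [s], t.Valid F :=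
    List.forall_mem_append.2 ⟨w.valid, List.forall_mem_singleton.2 hsv⟩
  exact ⟨⟨w.states ++ [s], List.append_ne_nil_of_right_ne_nil _ (List.cons_ne_nil _ _), isChain,
    valid⟩, List.prefix_append _ _, List.getLast_append_singleton _⟩

end World

/-- The canonical Kripke structure, in which the last state of a world determines its domain, its
predicates and its relation. -/
def canonicalKripke (F : Finset Formula) : Kripke (World F) ℕ where
  le := (· ≤ ·)
  le_refl := le_refl
  le_trans _ _ _ := le_trans
  le_antisymm _ _ := le_antisymm
  Dom w := w.current.forest.nodes
  Dom_ne w := ⟨0, w.current_valid.zero_mem⟩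
  Dom_mono _ _ h _ hx := (World.forest_mono h).1 hx
  Pr w p := {x | (x, Formula.atom p) ∈ w.current.forest.formulas}
  Pr_sub w _ _ hx := (w.current_valid.wellFormed.formulas hx).1
  Pr_mono _ _ _ h _ hx := (World.forest_mono h).2.2 hx
  Rel w d e := (d, e) ∈ w.current.forest.rel
  Rel_dom w _ _ h := w.current_valid.wellFormed.mem_nodes h
  Rel_mono _ _ _ _ h hd := (World.forest_mono h).2.1 hd

variable {A B : Formula}

/-- The truth lemma for `A`: at every world, `A` holds exactly where it labels a node. -/
def IsFaithful (F : Finset Formula) (A : Formula) : Prop :=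
  ∀ ⦃w : World F⦄ ⦃x⦄, x ∈ w.current.forest.nodes →
    (ksat (canonicalKripke F) w x A ↔ (x, A) ∈ w.current.forest.formulas)

theorem IsFaithful.imp (hF : SubformulaClosed F) (hAB : A.imp B ∈ F) (hA : IsFaithful F A)
    (hB : IsFaithful F B) : IsFaithful F (A.imp B) := by
  refine fun w x hx => ⟨fun h => ?_, fun h w' hw hxA => ?_⟩
  · by_contra hn
    obtain ⟨s, hnext, hs, hxA, hxB⟩ :=
      w.current_valid.exists_next_of_imp_notMem hF hx hAB hn
    obtain ⟨w', hw, rfl⟩ := w.exists_le_of_next hnext hs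
    have hx' := (World.forest_mono hw).1 hx
    exact hxB ((hB hx').1 (h w' hw ((hA hx').2 hxA)))
  · have hx' := (World.forest_mono hw).1 hx
    exact (hB hx').2 <| w'.current_valid.mem_of_isAxiom hx' (hF.imp hAB).2 <|
      .impL ((World.forest_mono hw).2.2 h) ((hA hx').1 hxA) rfl

theorem IsFaithful.box (hF : SubformulaClosed F) (hbox : A.box ∈ F) (hA : IsFaithful F A) :
    IsFaithful F A.box := by
  refine fun w x hx => ⟨fun h => ?_, fun h w' y hw hxy => ?_⟩
  · by_contra hn
    obtain ⟨s, hnext, hs, y, hxy, hyA⟩ :=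
      w.current_valid.exists_next_of_box_notMem hF hx hbox hn
    obtain ⟨w', hw, rfl⟩ := w.exists_le_of_next hnext hs
    exact hyA ((hA (hs.wellFormed.mem_nodes hxy).2).1 (h w' y hw hxy))
  · have hy := (w'.current_valid.wellFormed.mem_nodes hxy).2
    exact (hA hy).2 <| w'.current_valid.mem_of_isAxiom hy (hF.box hbox) <|
      .boxL hxy ((World.forest_mono hw).2.2 h) rfl

theorem isFaithful (hF : SubformulaClosed F) (hA : A ∈ F) : IsFaithful F A := by
  induction A with
  | atom p => exact fun w x _ => Iff.rfl
  | bot => exact fun w x _ => ⟨False.elim, fun h => w.current_valid.bot_notMem _ h⟩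
  | and A B ihA ihB =>
    intro w x hx
    rw [w.current_valid.and_mem_iff hF hx hA, ← ihA (hF.and hA).1 hx, ← ihB (hF.and hA).2 hx]
    rfl
  | or A B ihA ihB =>
    intro w x hx
    rw [w.current_valid.or_mem_iff hx hA, ← ihA (hF.or hA).1 hx, ← ihB (hF.or hA).2 hx]
    rfl
  | dia A ih =>
    intro w x hx
    rw [w.current_valid.dia_mem_iff hx hA]
    exact exists_congr fun y => and_congr_right fun hxy =>
      ih (hF.dia hA) (w.current_valid.wellFormed.mem_nodes hxy).2
  | imp A B ihA ihB => exact .imp hF hA (ihA (hF.imp hA).1) (ihB (hF.imp hA).2)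
  | box A ih => exact .box hF hA (ih (hF.box hA))

end CanonicalModel

/-! ### Termination -/

section Termination

variable {F : Finset Formula} {f : ℕ → World F} {g : ℕ → ℕ}

theorem exists_forall_getElem_eq_of_prefix {α : Type*} {f : ℕ → List α}
    (hf : ∀ ⦃m n⦄, m ≤ n → f m <+: f n) (hlen : ∀ k, ∃ n, k < (f n).length) :
    ∃ u : ℕ → α, ∀ n k (hk : k < (f n).length), (f n)[k] = u k := by
  choose ν hν using hlen
  refine ⟨fun k => (f (ν k))[k]'(hν k), fun n k hk => ?_⟩
  rcases le_total n (ν k) with hn | hn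
  exacts [(hf hn).getElem hk, ((hf hn).getElem (hν k)).symm]

theorem exists_isRun_of_length_unbounded (hf : Monotone f)
    (hlen : ∀ k, ∃ n, k < (f n).states.length) :
    ∃ u p, IsRun F u p ∧ ∀ n, ∃ k, (f n).current = u k := by
  obtain ⟨u, hu⟩ := exists_forall_getElem_eq_of_prefix (fun _ _ h => hf h) hlen
  have valid (k) : (u k).Valid F := by
    obtain ⟨n, hn⟩ := hlen k
    exact hu n k hn ▸ (f n).valid _ (List.getElem_mem hn)
  have next (k) : (u k).Next F (u (k + 1)) := by
    obtain ⟨n, hn⟩ := hlen (k + 1)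
    rw [← hu n (k + 1) hn, ← hu n k (Nat.lt_of_succ_lt hn)]
    exact List.isChain_iff_getElem.1 (f n).isChain k hn
  choose p hp using next
  refine ⟨u, p, ⟨valid, hp⟩, fun n => ⟨(f n).states.length - 1, ?_⟩⟩
  rw [World.current, List.getLast_eq_getElem, hu]

theorem eventually_eq_of_length_bounded (hf : Monotone f) {k : ℕ}
    (hk : ∀ n, (f n).states.length ≤ k) : ∃ m, ∀ n, m ≤ n → f n = f m := by
  have hlen : Monotone fun n => (f n).states.length := fun _ _ h => (hf h).length_le
  obtain ⟨l, m, hm⟩ := converges_of_monotone_of_bounded hlen hk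
  refine ⟨m, fun n hn => ((hf hn).antisymm ?_).symm⟩
  have heq := List.IsPrefix.eq_of_length (hf hn) ((hm m le_rfl).trans (hm n hn).symm)
  exact (heq ▸ List.prefix_rfl : (f n).states <+: (f m).states)

theorem not_forall_rel_of_eventually_eq {m : ℕ} (hm : ∀ n, m ≤ n → f n = f m) :
    ¬ ∀ n, (g n, g (n + 1)) ∈ (f (n + 1)).current.forest.rel := by
  intro hg
  have hmono : StrictMono g :=
    strictMono_nat_of_lt_succ fun n => (f (n + 1)).current_valid.wellFormed.lt (hg n)
  have mem_nodes : ∀ n ∈ Set.Ici m, g n ∈ (f m).current.forest.nodes := fun n hn => by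
    rw [← hm (n + 1) (Nat.le_succ_of_le hn)]
    exact ((f (n + 1)).current_valid.wellFormed.mem_nodes (hg n)).1
  exact Set.infinite_of_injOn_mapsTo hmono.injective.injOn mem_nodes (Set.Ici_infinite m)
    (f m).current.forest.nodes.finite_toSet

theorem predIGL_canonicalKripke (hF : SubformulaClosed F) : PredIGL (canonicalKripke F) := by
  refine ⟨fun w a b c => fun hab hbc => w.current_valid.wellFormed.trans hab hbc, ?_⟩
  rintro ⟨f, g, hfg⟩
  have hf : Monotone f := monotone_nat_of_le_succ fun n => (hfg n).2.1
  have hg (n) : (g n, g (n + 1)) ∈ (f (n + 1)).current.forest.rel := (hfg n).2.2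
  by_cases hlen : ∀ k, ∃ n, k < (f n).states.length
  · obtain ⟨u, p, hu, hcurrent⟩ := exists_isRun_of_length_unbounded hf hlen
    refine hu.not_forall_exists_rel hF g fun n => ?_
    obtain ⟨k, hk⟩ := hcurrent (n + 1)
    exact ⟨k, hk ▸ hg n⟩
  · push Not at hlen
    obtain ⟨k, hk⟩ := hlen
    obtain ⟨m, hm⟩ := eventually_eq_of_length_bounded hf hk
    exact not_forall_rel_of_eventually_eq hm hg

end Termination

/-! ### The initial world -/

section Subformulas

/-- The list of subformulas of a formula, the formula itself included. -/
def Formula.subformulas : Formula → List Formula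
  | .atom p => [.atom p]
  | .bot => [.bot]
  | .and A B => .and A B :: (A.subformulas ++ B.subformulas)
  | .or A B => .or A B :: (A.subformulas ++ B.subformulas)
  | .imp A B => .imp A B :: (A.subformulas ++ B.subformulas)
  | .box A => .box A :: A.subformulas
  | .dia A => .dia A :: A.subformulas

theorem Formula.self_mem_subformulas (A : Formula) : A ∈ A.subformulas := by
  cases A <;> exact List.mem_cons_self

theorem Formula.subformulas_subset {A B : Formula} (h : B ∈ A.subformulas) :
    B.subformulas ⊆ A.subformulas := by
  induction A <;> grind [subformulas]

theorem exists_subformulaClosed (s : Finset Formula) : ∃ F, SubformulaClosed F ∧ s ⊆ F := by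
  classical
  obtain ⟨F, hF⟩ : ∃ F : Finset Formula, ∀ A, A ∈ F ↔ ∃ B ∈ s, A ∈ B.subformulas :=
    ⟨s.biUnion fun B => B.subformulas.toFinset, by simp⟩
  have subformula_mem {A B} (hA : A ∈ F) (hB : B ∈ A.subformulas) : B ∈ F := by
    obtain ⟨C, hC, hAC⟩ := (hF A).1 hA
    exact (hF B).2 ⟨C, hC, Formula.subformulas_subset hAC hB⟩
  refine ⟨F, ?_, fun A hA => (hF A).2 ⟨A, hA, A.self_mem_subformulas⟩⟩
  constructor <;> intros <;> (try constructor) <;> refine subformula_mem ‹_› ?_ <;>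
    simp [Formula.subformulas, Formula.self_mem_subformulas]

end Subformulas

section InitialWorld

variable {F : Finset Formula} {V : Finset ℕ}

/-- The discrete forest on `V` labelled by the formulas in `s`. -/
def Forest.discrete (V : Finset ℕ) (s : Multiset LFormula) : Forest := ⟨V, ∅, {a | a ∈ s}⟩

theorem Forest.wellFormed_discrete {s : Multiset LFormula} (hs : ∀ a ∈ s, a.1 ∈ V ∧ a.2 ∈ F) :
    (Forest.discrete V s).WellFormed F where
  mem_nodes _ _ h := h.elim
  lt _ _ h := h.elim
  trans _ _ _ h := h.elim
  comparable _ _ _ h := h.elim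
  formulas _ _ h := hs _ h

theorem exists_world_of_not_provable (hF : SubformulaClosed F) {Γ Δ : Multiset LFormula}
    (h0 : 0 ∈ V) (hΓ : ∀ a ∈ Γ, a.1 ∈ V ∧ a.2 ∈ F) (hΔ : ∀ a ∈ Δ, a.1 ∈ V)
    (hn : ¬ Provable [] ⟨∅, {a | a ∈ Γ}, {a | a ∈ Δ}⟩) :
    ∃ w : World F, V ⊆ w.current.forest.nodes ∧ (∀ a ∈ Γ, a ∈ w.current.forest.formulas) ∧
      ∀ a ∈ Δ, a ∉ w.current.forest.formulas := by
  obtain ⟨T, hsteps, hT, hsat, hnT⟩ := exists_saturated hF (Forest.wellFormed_discrete hΓ) hn hΔ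
  have hle : Forest.discrete V Γ ≤ T := (Forest.Extends.of_steps hsteps).le
  have hvalid : State.Valid F ⟨[], T⟩ :=
    { wellFormed := hT
      saturated := hsat
      bot_notMem := fun _ hx => hnT (.of_isAxiom (.botL hx))
      zero_mem := hle.1 h0
      tracked_mem := fun _ hd => (List.not_mem_nil hd).elim
      ancestorsFirst := fun _ _ hd => (List.not_mem_nil hd).elim }
  exact ⟨⟨[⟨[], T⟩], List.cons_ne_nil _ _, List.isChain_singleton _,
    List.forall_mem_singleton.2 hvalid⟩, hle.1, fun _ ha => hle.2.2 ha,
    fun _ ha haT => hnT (.of_isAxiom (.id haT ha))⟩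

theorem exists_world_of_not_infProof {S : Sequent} (h : ¬ InfProof RuleMLIK4 S) :
    ∃ F, SubformulaClosed F ∧ ∃ w : World F,
      (∀ a ∈ S.left + S.right, a.1 ∈ w.current.forest.nodes ∧ a.2 ∈ F) ∧
      (∀ a ∈ S.left, a ∈ w.current.forest.formulas) ∧
      ∀ a ∈ S.right, a ∉ w.current.forest.formulas := by
  classical
  obtain ⟨F, hF, hSF⟩ := exists_subformulaClosed ((S.left + S.right).toFinset.image Prod.snd)
  let V : Finset ℕ := insert 0 ((S.left + S.right).toFinset.image Prod.fst)
  have mem (a) (ha : a ∈ S.left + S.right) : a.1 ∈ V ∧ a.2 ∈ F :=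
    ⟨Finset.mem_insert_of_mem (Finset.mem_image_of_mem _ (Multiset.mem_toFinset.2 ha)),
      hSF (Finset.mem_image_of_mem _ (Multiset.mem_toFinset.2 ha))⟩
  obtain ⟨w, hV, hleft, hright⟩ := exists_world_of_not_provable hF (Finset.mem_insert_self _ _)
    (fun a ha => mem a (Multiset.mem_add.2 (.inl ha)))
    (fun a ha => (mem a (Multiset.mem_add.2 (.inr ha))).1) (mt InfProof.of_provable h)
  exact ⟨F, hF, w, fun a ha => ⟨hV (mem a ha).1, (mem a ha).2⟩, hleft, hright⟩

end InitialWorld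

/-- **Countermodel construction.** If a labelled sequent has no ∞-proof in
mℓIK4 then there is a pred-IGL Kripke structure, a world and an environment
making every formula on the left true and every formula on the right false. -/
theorem countermodel_construction (S : Sequent) (h : ¬ InfProof RuleMLIK4 S) :
    ∃ (W D : Type) (K : Kripke W D), Nonempty W ∧ PredIGL K ∧
      ∃ (w : W) (ρ : ℕ → D), (∀ v, ρ v ∈ K.Dom w) ∧
        (∀ x A, (x, A) ∈ S.left → ksat K w (ρ x) A) ∧
        (∀ x A, (x, A) ∈ S.right → ¬ ksat K w (ρ x) A) := by
  classical
  obtain ⟨F, hF, w, mem, hleft, hright⟩ := exists_world_of_not_infProof h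
  let ρ (v : ℕ) : ℕ := if v ∈ w.current.forest.nodes then v else 0
  have ρ_mem (v) : ρ v ∈ w.current.forest.nodes := by
    unfold ρ
    split_ifs with hv
    exacts [hv, w.current_valid.zero_mem]
  have truth (x A) (hxA : (x, A) ∈ S.left + S.right) :
      ksat (canonicalKripke F) w (ρ x) A ↔ (x, A) ∈ w.current.forest.formulas := by
    rw [show ρ x = x from if_pos (mem _ hxA).1]
    exact isFaithful hF (mem _ hxA).2 (mem _ hxA).1
  exact ⟨World F, ℕ, canonicalKripke F, ⟨w⟩, predIGL_canonicalKripke hF, w, ρ, ρ_mem,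
    fun x A hA => (truth x A (Multiset.mem_add.2 (.inl hA))).2 (hleft _ hA),
    fun x A hA hk => hright _ hA ((truth x A (Multiset.mem_add.2 (.inr hA))).1 hk)⟩

end IGL
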